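/- arXiv:1203.2238 — 2 statements merged into one kernel-verified Lean document; each statement's English description precedes it below -/
import Mathlib

section
/- Equality case of the mixed anisoperimetric inequality: for anisotropy functions σ, μ and a closed curve Γ, equality L_σ(Γ)·L_μ(Γ) = (2√(|W_σ|·|W_μ|) + L_σ(∂W_μ))·A(Γ) holds if and only if Γ is homothetically similar to the boundary ∂W_{σ̃} of the Wulff shape of the mixed anisotropy σ̃ = √|W_μ|·σ + √|W_σ|·μ, i.e. there exist c > 0 and v ∈ ℝ² such that the image of x equals {c·w_{σ̃}(ν) + v : ν ∈ ℝ}, where w_{σ̃}(ν) = −σ̃(ν)(−sin ν, cos ν) + σ̃'(ν)(cos ν, sin ν). -/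
open Real

/-- The Wulff area `|W_σ| = (1/2)∫₀^{2π} σ(ν)(σ(ν)+σ''(ν)) dν`. -/
noncomputable def wulffArea (σ : ℝ → ℝ) : ℝ :=
  (1 / 2) * ∫ ν in (0:ℝ)..(2 * π), σ ν * (σ ν + deriv (deriv σ) ν)

/-- The mixed Wulff energy `L_σ(∂W_μ) = ∫₀^{2π} σ(ν)(μ(ν)+μ''(ν)) dν`. -/
noncomputable def mixedWulffEnergy (σ μ : ℝ → ℝ) : ℝ :=
  ∫ ν in (0:ℝ)..(2 * π), σ ν * (μ ν + deriv (deriv μ) ν)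

/-- The standard parameterization of the Wulff boundary `∂W_σ`:
`w_σ(ν) = −σ(ν)(−sin ν, cos ν) + σ'(ν)(cos ν, sin ν)`. -/
noncomputable def wulffPoint (σ : ℝ → ℝ) (t : ℝ) : ℝ × ℝ :=
  (-σ t) • ((-Real.sin t, Real.cos t) : ℝ × ℝ) +
    (deriv σ t) • ((Real.cos t, Real.sin t) : ℝ × ℝ)

/-!
The argument is Schmidt's proof of the isoperimetric inequality, carried out for a single anisotropy
`φ`. Scale the Wulff shape by `r` so that `Γ` and `∂(rW_φ)` have the same horizontal extent, and
pair each point of `Γ` with a point of `∂(rW_φ)` on the same vertical line. The paired point lies in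
`rW_φ`, so its component along the outer normal of `Γ` is at most `r φ(ν)`; integrating this over
`Γ` gives `A(Γ) + r²|W_φ| ≤ r L_φ(Γ)`. Completing the square in `r` yields the Wulff inequality
`4|W_φ| A(Γ) ≤ L_φ(Γ)²`. If equality holds, then `r = L_φ(Γ) / (2|W_φ|)` and the abscissae of `Γ`
and `∂(rW_φ)` agree up to a constant; since this value of `r` does not depend on the direction, a
quarter turn shows the same for the ordinates.

For the mixed inequality take `φ = L_μ(Γ) σ + L_σ(Γ) μ`: the Wulff inequality bounds its deficit
from below by a multiple of `(√|W_σ| L_μ(Γ) - √|W_μ| L_σ(Γ))² A(Γ)`, so equality makes the two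
terms equal, and then `Γ` is also extremal for `√|W_μ| σ + √|W_σ| μ`.

Conversely, a closed curve on `∂W_φ` is at each point tangent either to `∂W_φ` at the same angle or
to it at the opposite angle; the second case would make its tangent angle decrease, so the curve is
`u ↦ w_φ(ν(u))` and its length and area are those of `∂W_φ`.
-/

/-- An anisotropy function, of class `C²` so that the Wulff shape has a curvature. -/
structure IsAnisotropy (σ : ℝ → ℝ) : Prop where
  contDiff : ContDiff ℝ 2 σ
  periodic : Function.Periodic σ (2 * π)
  pos : ∀ t, 0 < σ t
  convex : ∀ t, 0 < σ t + deriv (deriv σ) t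

/-- A closed `C¹` curve `x` of rotation index one, with speed `g` and tangent angle `ν`; the period
is normalized to `1`, and self-intersections are allowed. -/
structure IsClosedCurve (x : ℝ → ℝ × ℝ) (g ν : ℝ → ℝ) : Prop where
  contDiff : ContDiff ℝ 1 x
  periodic : Function.Periodic x 1
  speed_pos : ∀ u, 0 < g u
  hasDerivAt : ∀ u, HasDerivAt x (g u • ((cos (ν u), sin (ν u)) : ℝ × ℝ)) u
  continuous_angle : Continuous ν
  angle_add_one : ∀ u, ν (u + 1) = ν u + 2 * π

/-- The anisotropic length `L_σ(Γ)` of a curve with speed `g` and tangent angle `ν`. -/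
noncomputable def anisotropicLength (σ g ν : ℝ → ℝ) : ℝ :=
  ∫ u in (0:ℝ)..1, σ (ν u) * g u

/-- The signed area `A(Γ)` enclosed by a curve `x` with speed `g` and tangent angle `ν`. -/
noncomputable def enclosedArea (x : ℝ → ℝ × ℝ) (g ν : ℝ → ℝ) : ℝ :=
  (1 / 2) * ∫ u in (0:ℝ)..1, ((x u).1 * (g u * sin (ν u)) - (x u).2 * (g u * cos (ν u)))

/-- The coordinate `det(p, (cos θ, sin θ))` of `p` along the outer normal `(sin θ, -cos θ)` of a
positively oriented curve with tangent angle `θ`. -/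
noncomputable def normalHeight (p : ℝ × ℝ) (θ : ℝ) : ℝ :=
  p.1 * sin θ - p.2 * cos θ

section Calculus

variable {E F : Type*} [NormedAddCommGroup E] [NormedSpace ℝ E] [NormedAddCommGroup F]
  [NormedSpace ℝ F]

lemma hasDerivAt_fst {f : ℝ → E × F} {f' : E × F} {t : ℝ} (hf : HasDerivAt f f' t) :
    HasDerivAt (fun s => (f s).1) f'.1 t := by
  simpa using hf.hasFDerivAt.fst.hasDerivAt

lemma hasDerivAt_snd {f : ℝ → E × F} {f' : E × F} {t : ℝ} (hf : HasDerivAt f f' t) :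
    HasDerivAt (fun s => (f s).2) f'.2 t := by
  simpa using hf.hasFDerivAt.snd.hasDerivAt

lemma surjective_of_map_add_one {f : ℝ → ℝ} {c : ℝ} (hf : Continuous f) (hc : 0 < c)
    (hadd : ∀ u, f (u + 1) = f u + c) : Function.Surjective f := by
  let φ : AddConstMap ℝ ℝ 1 c := ⟨f, hadd⟩
  intro y
  obtain ⟨n, hn, -⟩ := existsUnique_add_zsmul_mem_Ico hc (f 0) y
  have hn_val : f n = f 0 + n • c := by
    have hmap := AddConstMapClass.map_add_int' φ 0 n
    rwa [zero_add] at hmap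
  have hpred : f (n - 1) = f n - c := by
    rw [← add_sub_cancel_right (f (n - 1)) c, ← hadd, sub_add_cancel]
  have hmem : y ∈ Set.Icc (f (n - 1)) (f n) := by
    constructor <;> linarith [hn.1, hn.2]
  obtain ⟨u, -, hu⟩ := intermediate_value_Icc (by linarith) hf.continuousOn hmem
  exact ⟨u, hu⟩

lemma deriv_periodic {f : ℝ → E} {T : ℝ} (hf : Function.Periodic f T) :
    Function.Periodic (deriv f) T := fun t => by
  rw [← deriv_comp_add_const, hf.funext]

lemma deriv_deriv_comp_add_const (f : ℝ → E) (a : ℝ) :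
    deriv (deriv fun s => f (s + a)) = fun s => deriv (deriv f) (s + a) := by
  rw [funext (deriv_comp_add_const f a), funext (deriv_comp_add_const (deriv f) a)]

lemma integral_deriv_eq_zero_of_periodic [CompleteSpace E] {P p : ℝ → E} {T : ℝ}
    (hP : Function.Periodic P T) (hderiv : ∀ u, HasDerivAt P (p u) u) (hp : Continuous p) (a : ℝ) :
    ∫ u in a..a + T, p u = 0 := by
  rw [intervalIntegral.integral_eq_sub_of_hasDerivAt (fun u _ => hderiv u)
    (hp.intervalIntegrable _ _), hP a, sub_self]

lemma integral_mul_deriv_of_periodic {P Q p q : ℝ → ℝ} {T : ℝ} (hP : Function.Periodic P T)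
    (hQ : Function.Periodic Q T) (hPderiv : ∀ u, HasDerivAt P (p u) u)
    (hQderiv : ∀ u, HasDerivAt Q (q u) u) (hp : Continuous p) (hq : Continuous q) (a : ℝ) :
    ∫ u in a..a + T, P u * q u = (1 / 2) * ∫ u in a..a + T, (P u * q u - Q u * p u) := by
  have hPc : Continuous P := continuous_iff_continuousAt.2 fun u => (hPderiv u).continuousAt
  have hQc : Continuous Q := continuous_iff_continuousAt.2 fun u => (hQderiv u).continuousAt
  have hzero : ∫ u in a..a + T, (p u * Q u + P u * q u) = 0 :=
    integral_deriv_eq_zero_of_periodic (hP.mul hQ) (fun u => (hPderiv u).mul (hQderiv u))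
      (by fun_prop) a
  rw [← add_zero (∫ u in a..a + T, (P u * q u - Q u * p u)), ← hzero,
    ← intervalIntegral.integral_add, ← intervalIntegral.integral_const_mul]
  · congr 1 with u
    ring
  all_goals exact Continuous.intervalIntegrable (by fun_prop) _ _

lemma integral_mul_deriv_eq_of_eqOn_comp {f f' F F' G Y H : ℝ → ℝ} {a b α β : ℝ}
    (hf : ∀ u, HasDerivAt f (f' u) u) (hf' : Continuous f') (hF : ∀ t, HasDerivAt F (F' t) t)
    (hF' : Continuous F') (hG : Continuous G) (ha : f a = F α) (hb : f b = F β)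
    (hY : Set.EqOn (G ∘ f) Y (Set.uIcc a b)) (hH : Set.EqOn (G ∘ F) H (Set.uIcc α β)) :
    ∫ u in a..b, Y u * f' u = ∫ t in α..β, H t * F' t := by
  calc ∫ u in a..b, Y u * f' u = ∫ u in a..b, (G ∘ f) u * f' u :=
        intervalIntegral.integral_congr fun u hu => congrArg (· * f' u) (hY hu).symm
    _ = ∫ y in f a..f b, G y :=
        intervalIntegral.integral_comp_mul_deriv (fun u _ => hf u) hf'.continuousOn hG
    _ = ∫ t in α..β, (G ∘ F) t * F' t := by
        rw [ha, hb]
        exact (intervalIntegral.integral_comp_mul_deriv (fun t _ => hF t) hF'.continuousOn hG).symm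
    _ = ∫ t in α..β, H t * F' t :=
        intervalIntegral.integral_congr fun t ht => congrArg (· * F' t) (hH ht)

lemma exists_continuous_glue {X : Type*} [TopologicalSpace X] {G H : ℝ → X} {b : ℝ}
    (hG : Continuous G) (hH : Continuous H) (hb : G b = H b) :
    ∃ Y : ℝ → X, Continuous Y ∧ Set.EqOn G Y (Set.Iic b) ∧ Set.EqOn H Y (Set.Ici b) := by
  refine ⟨fun u => if u ≤ b then G u else H u,
    Continuous.if_le hG hH continuous_id continuous_const fun u hu => by rw [hu, hb],
    fun u hu => (if_pos hu).symm, fun u hu => ?_⟩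
  rcases (Set.mem_Ici.1 hu).eq_or_lt with rfl | hlt
  · simp only [le_refl, if_true, hb]
  · exact (if_neg hlt.not_ge).symm

end Calculus

lemma exists_continuous_eqOn_comp {X Y : Type*} [TopologicalSpace X] [TopologicalSpace Y]
    [T2Space Y] [NormalSpace Y] {K : Set X} (hK : IsCompact K) {f : X → Y} {h : X → ℝ}
    (hf : ContinuousOn f K) (hinj : Set.InjOn f K) (hh : ContinuousOn h K) :
    ∃ G : Y → ℝ, Continuous G ∧ Set.EqOn (G ∘ f) h K := by
  have := isCompact_iff_compactSpace.1 hK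
  have hembed := hf.domRestrict.isClosedEmbedding hinj.injective
  obtain ⟨G, hG⟩ := ContinuousMap.exists_extension' hembed ⟨K.domRestrict h, hh.domRestrict⟩
  exact ⟨G, G.continuous, fun t ht => congrFun hG ⟨t, ht⟩⟩

section NormalHeight

@[fun_prop]
lemma continuous_normalHeight {X : Type*} [TopologicalSpace X] {y : X → ℝ × ℝ} {θ : X → ℝ}
    (hy : Continuous y) (hθ : Continuous θ) : Continuous fun u => normalHeight (y u) (θ u) := by
  unfold normalHeight
  fun_prop

lemma normalHeight_smul (c : ℝ) (p : ℝ × ℝ) (θ : ℝ) :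
    normalHeight (c • p) θ = c * normalHeight p θ := by
  simp only [normalHeight, Prod.smul_fst, Prod.smul_snd, smul_eq_mul]
  ring

lemma normalHeight_pi_div_two (p : ℝ × ℝ) : normalHeight p (π / 2) = p.1 := by
  simp [normalHeight]

lemma normalHeight_add_pi (p : ℝ × ℝ) (θ : ℝ) :
    normalHeight p (θ + π) = -normalHeight p θ := by
  simp only [normalHeight, sin_add_pi, cos_add_pi]
  ring

lemma hasDerivAt_normalHeight {y : ℝ → ℝ × ℝ} {k ψ u : ℝ}
    (hy : HasDerivAt y (k • ((cos ψ, sin ψ) : ℝ × ℝ)) u) (θ : ℝ) :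
    HasDerivAt (fun s => normalHeight (y s) θ) (k * sin (θ - ψ)) u := by
  refine (((hasDerivAt_fst hy).mul_const (sin θ)).sub
    ((hasDerivAt_snd hy).mul_const (cos θ))).congr_deriv ?_
  simp only [Prod.smul_fst, Prod.smul_snd, smul_eq_mul, sin_sub]
  ring

end NormalHeight

section WulffPoint

variable (σ : ℝ → ℝ) (t : ℝ)

lemma wulffPoint_fst : (wulffPoint σ t).1 = σ t * sin t + deriv σ t * cos t := by
  simp [wulffPoint]

lemma wulffPoint_snd : (wulffPoint σ t).2 = -σ t * cos t + deriv σ t * sin t := by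
  simp [wulffPoint]

lemma normalHeight_wulffPoint_self : normalHeight (wulffPoint σ t) t = σ t := by
  rw [normalHeight, wulffPoint_fst, wulffPoint_snd]
  linear_combination σ t * sin_sq_add_cos_sq t

lemma wulffPoint_const_mul (r : ℝ) :
    wulffPoint (fun s => r * σ s) t = r • wulffPoint σ t := by
  ext <;> simp only [wulffPoint_fst, wulffPoint_snd, deriv_const_mul_field, Prod.smul_fst,
    Prod.smul_snd, smul_eq_mul] <;> ring

lemma wulffPoint_comp_add_pi_div_two :
    wulffPoint (fun s => σ (s + π / 2)) t =
      ((wulffPoint σ (t + π / 2)).2, -(wulffPoint σ (t + π / 2)).1) := by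
  ext <;> simp only [wulffPoint_fst, wulffPoint_snd, deriv_comp_add_const, sin_add_pi_div_two,
    cos_add_pi_div_two] <;> ring

lemma wulffPoint_comp_add_pi :
    wulffPoint (fun s => σ (s + π)) t = -wulffPoint σ (t + π) := by
  ext <;> simp only [wulffPoint_fst, wulffPoint_snd, deriv_comp_add_const, sin_add_pi,
    cos_add_pi, Prod.fst_neg, Prod.snd_neg] <;> ring

lemma wulffArea_const_mul (r : ℝ) : wulffArea (fun s => r * σ s) = r ^ 2 * wulffArea σ := by
  simp only [wulffArea, deriv_const_mul_field']
  rw [mul_left_comm, ← intervalIntegral.integral_const_mul (r ^ 2)]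
  congr 2 with s
  ring

lemma enclosedArea_quarterTurn (x : ℝ → ℝ × ℝ) (g ν : ℝ → ℝ) :
    enclosedArea (fun u => ((x u).2, -(x u).1)) g (fun u => ν u - π / 2) =
      enclosedArea x g ν := by
  simp only [enclosedArea, sin_sub_pi_div_two, cos_sub_pi_div_two]
  congr 2 with u
  ring

lemma anisotropicLength_comp_add_const (g ν : ℝ → ℝ) (θ : ℝ) :
    anisotropicLength (fun s => σ (s + θ)) g (fun u => ν u - θ) = anisotropicLength σ g ν := by
  simp only [anisotropicLength, sub_add_cancel]

lemma mixedWulffEnergy_self : mixedWulffEnergy σ σ = 2 * wulffArea σ := by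
  rw [mixedWulffEnergy, wulffArea]
  ring

lemma anisotropicLength_const_mul (r : ℝ) (g ν : ℝ → ℝ) :
    anisotropicLength (fun s => r * σ s) g ν = r * anisotropicLength σ g ν := by
  simp only [anisotropicLength, mul_assoc, intervalIntegral.integral_const_mul]

end WulffPoint

namespace IsAnisotropy

variable {σ μ χ : ℝ → ℝ}

lemma contDiff_deriv (hσ : IsAnisotropy σ) : ContDiff ℝ 1 (deriv σ) :=
  (contDiff_succ_iff_deriv (n := 1).1 hσ.contDiff).2.2

lemma continuous (hσ : IsAnisotropy σ) : Continuous σ :=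
  hσ.contDiff.continuous

lemma continuous_deriv (hσ : IsAnisotropy σ) : Continuous (deriv σ) :=
  hσ.contDiff_deriv.continuous

lemma continuous_deriv_deriv (hσ : IsAnisotropy σ) : Continuous (deriv (deriv σ)) :=
  hσ.contDiff_deriv.continuous_deriv le_rfl

lemma hasDerivAt (hσ : IsAnisotropy σ) (t : ℝ) : HasDerivAt σ (deriv σ t) t :=
  (hσ.contDiff.differentiable two_ne_zero t).hasDerivAt

lemma hasDerivAt_deriv (hσ : IsAnisotropy σ) (t : ℝ) :
    HasDerivAt (deriv σ) (deriv (deriv σ) t) t :=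
  (hσ.contDiff_deriv.differentiable one_ne_zero t).hasDerivAt

lemma periodic_deriv (hσ : IsAnisotropy σ) : Function.Periodic (deriv σ) (2 * π) :=
  deriv_periodic hσ.periodic

lemma const_mul (hσ : IsAnisotropy σ) {r : ℝ} (hr : 0 < r) :
    IsAnisotropy fun s => r * σ s where
  contDiff := contDiff_const.mul hσ.contDiff
  periodic t := by simp only [hσ.periodic t]
  pos t := mul_pos hr (hσ.pos t)
  convex t := by
    simp only [deriv_const_mul_field', ← mul_add]
    exact mul_pos hr (hσ.convex t)

lemma add (hσ : IsAnisotropy σ) (hμ : IsAnisotropy μ) : IsAnisotropy fun s => σ s + μ s where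
  contDiff := hσ.contDiff.add hμ.contDiff
  periodic t := by simp only [hσ.periodic t, hμ.periodic t]
  pos t := add_pos (hσ.pos t) (hμ.pos t)
  convex t := by
    have hderiv : deriv (fun s => σ s + μ s) = fun s => deriv σ s + deriv μ s :=
      funext fun s => ((hσ.hasDerivAt s).add (hμ.hasDerivAt s)).deriv
    rw [hderiv, deriv_fun_add (hσ.hasDerivAt_deriv t).differentiableAt
      (hμ.hasDerivAt_deriv t).differentiableAt]
    linarith [hσ.convex t, hμ.convex t]

lemma comp_add_const (hσ : IsAnisotropy σ) (θ : ℝ) : IsAnisotropy fun s => σ (s + θ) where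
  contDiff := hσ.contDiff.comp (contDiff_id.add contDiff_const)
  periodic t := by simp only [add_right_comm t, hσ.periodic (t + θ)]
  pos t := hσ.pos _
  convex t := by
    rw [deriv_deriv_comp_add_const]
    exact hσ.convex _

lemma mixedWulffEnergy_pos (hσ : IsAnisotropy σ) (hμ : IsAnisotropy μ) :
    0 < mixedWulffEnergy σ μ := by
  have := hσ.continuous
  have := hμ.continuous
  have := hμ.continuous_deriv_deriv
  exact intervalIntegral.intervalIntegral_pos_of_pos
    (Continuous.intervalIntegrable (by fun_prop) _ _)
    (fun t => mul_pos (hσ.pos t) (hμ.convex t)) two_pi_pos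

lemma wulffArea_pos (hσ : IsAnisotropy σ) : 0 < wulffArea σ := by
  linarith [hσ.mixedWulffEnergy_pos hσ, mixedWulffEnergy_self σ]

lemma mixedWulffEnergy_comm (hσ : IsAnisotropy σ) (hμ : IsAnisotropy μ) :
    mixedWulffEnergy σ μ = mixedWulffEnergy μ σ := by
  have := hσ.continuous
  have := hσ.continuous_deriv_deriv
  have := hμ.continuous
  have := hμ.continuous_deriv_deriv
  have hzero : ∫ t in (0:ℝ)..0 + 2 * π,
      (σ t * (μ t + deriv (deriv μ) t) - μ t * (σ t + deriv (deriv σ) t)) = 0 := by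
    refine integral_deriv_eq_zero_of_periodic
      (P := fun t => σ t * deriv μ t - μ t * deriv σ t)
      (fun t => by simp only [hσ.periodic t, hμ.periodic t, hσ.periodic_deriv t,
        hμ.periodic_deriv t]) (fun t => ?_) (by fun_prop) 0
    refine (((hσ.hasDerivAt t).mul (hμ.hasDerivAt_deriv t)).sub
      ((hμ.hasDerivAt t).mul (hσ.hasDerivAt_deriv t))).congr_deriv ?_
    ring
  rw [zero_add, intervalIntegral.integral_sub (Continuous.intervalIntegrable (by fun_prop) _ _)
    (Continuous.intervalIntegrable (by fun_prop) _ _)] at hzero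
  exact sub_eq_zero.1 hzero

lemma integral_eq_mixedWulffEnergy (hσ : IsAnisotropy σ) (hμ : IsAnisotropy μ) (a : ℝ) :
    ∫ t in a..a + 2 * π, σ t * (μ t + deriv (deriv μ) t) = mixedWulffEnergy σ μ := by
  have hper : Function.Periodic (fun t => σ t * (μ t + deriv (deriv μ) t)) (2 * π) := fun t => by
    simp only [hσ.periodic t, hμ.periodic t, deriv_periodic hμ.periodic_deriv t]
  rw [hper.intervalIntegral_add_eq a 0, zero_add, mixedWulffEnergy]

lemma wulffArea_comp_add_const (hσ : IsAnisotropy σ) (θ : ℝ) :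
    wulffArea (fun s => σ (s + θ)) = wulffArea σ := by
  rw [wulffArea, deriv_deriv_comp_add_const,
    intervalIntegral.integral_comp_add_right (fun t => σ t * (σ t + deriv (deriv σ) t)) θ,
    zero_add, add_comm, hσ.integral_eq_mixedWulffEnergy hσ, mixedWulffEnergy_self]
  ring

lemma mixedWulffEnergy_linearComb_left (hσ : IsAnisotropy σ) (hμ : IsAnisotropy μ)
    (hχ : IsAnisotropy χ) (a b : ℝ) :
    mixedWulffEnergy (fun s => a * σ s + b * μ s) χ =
      a * mixedWulffEnergy σ χ + b * mixedWulffEnergy μ χ := by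
  have := hσ.continuous
  have := hμ.continuous
  have := hχ.continuous
  have := hχ.continuous_deriv_deriv
  simp only [mixedWulffEnergy]
  rw [← intervalIntegral.integral_const_mul, ← intervalIntegral.integral_const_mul,
    ← intervalIntegral.integral_add]
  · congr 1 with t
    ring
  all_goals exact Continuous.intervalIntegrable (by fun_prop) _ _

lemma linearComb (hσ : IsAnisotropy σ) (hμ : IsAnisotropy μ) {a b : ℝ} (ha : 0 < a)
    (hb : 0 < b) : IsAnisotropy fun s => a * σ s + b * μ s :=
  (hσ.const_mul ha).add (hμ.const_mul hb)

lemma mixedWulffEnergy_linearComb_right (hσ : IsAnisotropy σ) (hμ : IsAnisotropy μ)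
    (hχ : IsAnisotropy χ) {a b : ℝ} (ha : 0 < a) (hb : 0 < b) :
    mixedWulffEnergy χ (fun s => a * σ s + b * μ s) =
      a * mixedWulffEnergy χ σ + b * mixedWulffEnergy χ μ := by
  rw [hχ.mixedWulffEnergy_comm (hσ.linearComb hμ ha hb),
    hσ.mixedWulffEnergy_linearComb_left hμ hχ, hχ.mixedWulffEnergy_comm hσ,
    hχ.mixedWulffEnergy_comm hμ]

lemma wulffArea_linearComb (hσ : IsAnisotropy σ) (hμ : IsAnisotropy μ) {a b : ℝ} (ha : 0 < a)
    (hb : 0 < b) :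
    wulffArea (fun s => a * σ s + b * μ s) =
      a ^ 2 * wulffArea σ + a * b * mixedWulffEnergy σ μ + b ^ 2 * wulffArea μ := by
  have hcomb := hσ.linearComb hμ ha hb
  have hexpand := hσ.mixedWulffEnergy_linearComb_left hμ hcomb a b
  rw [mixedWulffEnergy_self, hσ.mixedWulffEnergy_linearComb_right hμ hσ ha hb,
    hσ.mixedWulffEnergy_linearComb_right hμ hμ ha hb, mixedWulffEnergy_self,
    mixedWulffEnergy_self, hμ.mixedWulffEnergy_comm hσ] at hexpand
  linear_combination hexpand / 2

lemma hasDerivAt_wulffPoint (hσ : IsAnisotropy σ) (t : ℝ) :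
    HasDerivAt (wulffPoint σ)
      ((σ t + deriv (deriv σ) t) • ((cos t, sin t) : ℝ × ℝ)) t := by
  have hnormal := (hasDerivAt_sin t).neg.prodMk (hasDerivAt_cos t)
  have htangent := (hasDerivAt_cos t).prodMk (hasDerivAt_sin t)
  refine (((hσ.hasDerivAt t).neg.smul hnormal).add
    ((hσ.hasDerivAt_deriv t).smul htangent)).congr_deriv ?_
  ext <;> simp <;> ring

lemma hasDerivAt_wulffPoint_fst (hσ : IsAnisotropy σ) (t : ℝ) :
    HasDerivAt (fun s => (wulffPoint σ s).1) ((σ t + deriv (deriv σ) t) * cos t) t :=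
  hasDerivAt_fst (hσ.hasDerivAt_wulffPoint t)

lemma hasDerivAt_wulffPoint_snd (hσ : IsAnisotropy σ) (t : ℝ) :
    HasDerivAt (fun s => (wulffPoint σ s).2) ((σ t + deriv (deriv σ) t) * sin t) t :=
  hasDerivAt_snd (hσ.hasDerivAt_wulffPoint t)

lemma continuous_wulffPoint (hσ : IsAnisotropy σ) : Continuous (wulffPoint σ) :=
  continuous_iff_continuousAt.2 fun t => (hσ.hasDerivAt_wulffPoint t).continuousAt

lemma periodic_wulffPoint (hσ : IsAnisotropy σ) :
    Function.Periodic (wulffPoint σ) (2 * π) := fun t => by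
  simp only [wulffPoint, hσ.periodic t, hσ.periodic_deriv t, sin_add_two_pi, cos_add_two_pi]

lemma strictMonoOn_normalHeight_wulffPoint (hσ : IsAnisotropy σ) (s : ℝ) :
    StrictMonoOn (fun t => normalHeight (wulffPoint σ t) s) (Set.Icc (s - π) s) := by
  have hderiv t := hasDerivAt_normalHeight (hσ.hasDerivAt_wulffPoint t) s
  refine strictMonoOn_of_deriv_pos (convex_Icc _ _)
    (fun t _ => (hderiv t).continuousAt.continuousWithinAt) fun t ht => ?_
  rw [interior_Icc] at ht
  rw [(hderiv t).deriv]
  exact mul_pos (hσ.convex t) (sin_pos_of_pos_of_lt_pi (by linarith [ht.2]) (by linarith [ht.1]))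

lemma strictAntiOn_normalHeight_wulffPoint (hσ : IsAnisotropy σ) (s : ℝ) :
    StrictAntiOn (fun t => normalHeight (wulffPoint σ t) s) (Set.Icc s (s + π)) := by
  have hderiv t := hasDerivAt_normalHeight (hσ.hasDerivAt_wulffPoint t) s
  refine strictAntiOn_of_deriv_neg (convex_Icc _ _)
    (fun t _ => (hderiv t).continuousAt.continuousWithinAt) fun t ht => ?_
  rw [interior_Icc] at ht
  rw [(hderiv t).deriv]
  exact mul_neg_of_pos_of_neg (hσ.convex t)
    (sin_neg_of_neg_of_neg_pi_lt (by linarith [ht.1]) (by linarith [ht.2]))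

lemma strictMonoOn_wulffPoint_fst (hσ : IsAnisotropy σ) :
    StrictMonoOn (fun t => (wulffPoint σ t).1) (Set.Icc (-(π / 2)) (π / 2)) := by
  have hmono := hσ.strictMonoOn_normalHeight_wulffPoint (π / 2)
  rw [show π / 2 - π = -(π / 2) by ring] at hmono
  simpa only [normalHeight_pi_div_two] using hmono

lemma strictAntiOn_wulffPoint_fst (hσ : IsAnisotropy σ) :
    StrictAntiOn (fun t => (wulffPoint σ t).1) (Set.Icc (π / 2) (π / 2 + π)) := by
  simpa only [normalHeight_pi_div_two] using hσ.strictAntiOn_normalHeight_wulffPoint (π / 2)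

lemma exists_continuous_graph_of_injOn (hσ : IsAnisotropy σ) {α β : ℝ}
    (hinj : Set.InjOn (fun t => (wulffPoint σ t).1) (Set.uIcc α β)) :
    ∃ G : ℝ → ℝ, Continuous G ∧
      Set.EqOn (G ∘ fun t => (wulffPoint σ t).1) (fun t => (wulffPoint σ t).2) (Set.uIcc α β) ∧
      ∀ p ∈ Set.uIcc (wulffPoint σ α).1 (wulffPoint σ β).1,
        (p, G p) ∈ Set.range (wulffPoint σ) := by
  have hw := hσ.continuous_wulffPoint
  obtain ⟨G, hG, hGw⟩ := exists_continuous_eqOn_comp isCompact_uIcc hw.fst.continuousOn hinj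
    hw.snd.continuousOn
  refine ⟨G, hG, hGw, fun p hp => ?_⟩
  obtain ⟨t, ht, rfl⟩ := intermediate_value_uIcc hw.fst.continuousOn hp
  exact ⟨t, Prod.ext rfl (hGw ht).symm⟩

lemma wulffPoint_pi_div_two_add_pi (hσ : IsAnisotropy σ) :
    wulffPoint σ (π / 2 + π) = wulffPoint σ (-(π / 2)) := by
  rw [← hσ.periodic_wulffPoint (-(π / 2))]
  ring_nf

lemma exists_continuous_lower_graph (hσ : IsAnisotropy σ) :
    ∃ G : ℝ → ℝ, Continuous G ∧
      Set.EqOn (G ∘ fun t => (wulffPoint σ t).1) (fun t => (wulffPoint σ t).2)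
        (Set.uIcc (-(π / 2)) (π / 2)) ∧
      ∀ p ∈ Set.Icc (wulffPoint σ (-(π / 2))).1 (wulffPoint σ (π / 2)).1,
        (p, G p) ∈ Set.range (wulffPoint σ) := by
  obtain ⟨G, hGc, hG, hmem⟩ := hσ.exists_continuous_graph_of_injOn (α := -(π / 2)) (β := π / 2)
    (by rw [Set.uIcc_of_le (by linarith [pi_pos])]; exact hσ.strictMonoOn_wulffPoint_fst.injOn)
  exact ⟨G, hGc, hG, fun p hp => hmem p (Set.Icc_subset_uIcc hp)⟩

lemma exists_continuous_upper_graph (hσ : IsAnisotropy σ) :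
    ∃ H : ℝ → ℝ, Continuous H ∧
      Set.EqOn (H ∘ fun t => (wulffPoint σ t).1) (fun t => (wulffPoint σ t).2)
        (Set.uIcc (π / 2) (π / 2 + π)) ∧
      ∀ p ∈ Set.Icc (wulffPoint σ (-(π / 2))).1 (wulffPoint σ (π / 2)).1,
        (p, H p) ∈ Set.range (wulffPoint σ) := by
  obtain ⟨H, hHc, hH, hmem⟩ := hσ.exists_continuous_graph_of_injOn (α := π / 2)
    (β := π / 2 + π)
    (by rw [Set.uIcc_of_le (by linarith [pi_pos])]; exact hσ.strictAntiOn_wulffPoint_fst.injOn)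
  rw [hσ.wulffPoint_pi_div_two_add_pi] at hmem
  exact ⟨H, hHc, hH, fun p hp => hmem p (Set.Icc_subset_uIcc' hp)⟩

lemma normalHeight_wulffPoint_lt (hσ : IsAnisotropy σ) {s t : ℝ}
    (hne : wulffPoint σ t ≠ wulffPoint σ s) : normalHeight (wulffPoint σ t) s < σ s := by
  have hπ := pi_pos
  obtain ⟨t', ht', hwt⟩ := hσ.periodic_wulffPoint.exists_mem_Ico two_pi_pos t (s - π)
  rw [hwt] at hne ⊢
  rw [← normalHeight_wulffPoint_self σ s]
  rcases lt_trichotomy t' s with hlt | rfl | hgt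
  · exact hσ.strictMonoOn_normalHeight_wulffPoint s ⟨ht'.1, hlt.le⟩ ⟨by linarith, le_rfl⟩ hlt
  · exact absurd rfl hne
  · exact hσ.strictAntiOn_normalHeight_wulffPoint s ⟨le_rfl, by linarith⟩
      ⟨hgt.le, by linarith [ht'.2]⟩ hgt

lemma normalHeight_wulffPoint_le (hσ : IsAnisotropy σ) (s t : ℝ) :
    normalHeight (wulffPoint σ t) s ≤ σ s := by
  by_cases heq : wulffPoint σ t = wulffPoint σ s
  · rw [heq, normalHeight_wulffPoint_self]
  · exact (hσ.normalHeight_wulffPoint_lt heq).le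

lemma integral_wulffPoint_snd_mul (hσ : IsAnisotropy σ) (a : ℝ) :
    ∫ t in a..a + 2 * π, (wulffPoint σ t).2 * ((σ t + deriv (deriv σ) t) * cos t) =
      -wulffArea σ := by
  have := hσ.continuous
  have := hσ.continuous_deriv_deriv
  calc ∫ t in a..a + 2 * π, (wulffPoint σ t).2 * ((σ t + deriv (deriv σ) t) * cos t)
      = (1 / 2) * ∫ t in a..a + 2 * π,
          ((wulffPoint σ t).2 * ((σ t + deriv (deriv σ) t) * cos t) -
            (wulffPoint σ t).1 * ((σ t + deriv (deriv σ) t) * sin t)) :=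
        integral_mul_deriv_of_periodic (hσ.periodic_wulffPoint.comp Prod.snd)
          (hσ.periodic_wulffPoint.comp Prod.fst) hσ.hasDerivAt_wulffPoint_snd
          hσ.hasDerivAt_wulffPoint_fst (by fun_prop) (by fun_prop) a
    _ = (1 / 2) * ∫ t in a..a + 2 * π, -(σ t * (σ t + deriv (deriv σ) t)) := by
        congr! 3 with t
        simp only [wulffPoint_fst, wulffPoint_snd]
        linear_combination -(σ t * (σ t + deriv (deriv σ) t)) * sin_sq_add_cos_sq t
    _ = -wulffArea σ := by
        rw [intervalIntegral.integral_neg, hσ.integral_eq_mixedWulffEnergy hσ,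
          mixedWulffEnergy_self]
        ring

end IsAnisotropy

namespace IsClosedCurve

variable {x : ℝ → ℝ × ℝ} {g ν σ μ φ : ℝ → ℝ}

lemma continuous (hx : IsClosedCurve x g ν) : Continuous x :=
  hx.contDiff.continuous

lemma hasDerivAt_fst (hx : IsClosedCurve x g ν) (u : ℝ) :
    HasDerivAt (fun s => (x s).1) (g u * cos (ν u)) u :=
  _root_.hasDerivAt_fst (hx.hasDerivAt u)

lemma hasDerivAt_snd (hx : IsClosedCurve x g ν) (u : ℝ) :
    HasDerivAt (fun s => (x s).2) (g u * sin (ν u)) u :=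
  _root_.hasDerivAt_snd (hx.hasDerivAt u)

lemma speed_eq (hx : IsClosedCurve x g ν) (u : ℝ) :
    g u = (deriv x u).1 * cos (ν u) + (deriv x u).2 * sin (ν u) := by
  rw [(hx.hasDerivAt u).deriv]
  simp only [Prod.smul_fst, Prod.smul_snd, smul_eq_mul]
  linear_combination -g u * sin_sq_add_cos_sq (ν u)

lemma continuous_speed (hx : IsClosedCurve x g ν) : Continuous g := by
  have := hx.contDiff.continuous_deriv le_rfl
  have := hx.continuous_angle
  rw [funext hx.speed_eq]
  fun_prop

lemma speed_add_one (hx : IsClosedCurve x g ν) (u : ℝ) : g (u + 1) = g u := by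
  have hderiv : deriv x (u + 1) = deriv x u := by rw [← deriv_comp_add_const, hx.periodic.funext]
  rw [hx.speed_eq, hx.speed_eq u, hderiv, hx.angle_add_one, cos_add_two_pi, sin_add_two_pi]

lemma surjective_angle (hx : IsClosedCurve x g ν) : Function.Surjective ν :=
  surjective_of_map_add_one hx.continuous_angle two_pi_pos hx.angle_add_one

lemma add_const (hx : IsClosedCurve x g ν) (v : ℝ × ℝ) :
    IsClosedCurve (fun u => x u + v) g ν where
  contDiff := hx.contDiff.add contDiff_const
  periodic u := by simp only [hx.periodic u]
  speed_pos := hx.speed_pos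
  hasDerivAt u := (hx.hasDerivAt u).add_const v
  continuous_angle := hx.continuous_angle
  angle_add_one := hx.angle_add_one

lemma quarterTurn (hx : IsClosedCurve x g ν) :
    IsClosedCurve (fun u => ((x u).2, -(x u).1)) g (fun u => ν u - π / 2) where
  contDiff := hx.contDiff.snd.prodMk hx.contDiff.fst.neg
  periodic u := by simp only [hx.periodic u]
  speed_pos := hx.speed_pos
  hasDerivAt u := ((hx.hasDerivAt_snd u).prodMk (hx.hasDerivAt_fst u).neg).congr_deriv <| by
    ext <;> simp [cos_sub_pi_div_two, sin_sub_pi_div_two]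
  continuous_angle := hx.continuous_angle.sub continuous_const
  angle_add_one u := by rw [hx.angle_add_one]; ring

lemma enclosedArea_eq_integral (hx : IsClosedCurve x g ν) (a : ℝ) :
    enclosedArea x g ν = ∫ u in a..a + 1, (x u).1 * (g u * sin (ν u)) := by
  have := hx.continuous_angle
  have := hx.continuous_speed
  have hper : Function.Periodic
      (fun u => (x u).1 * (g u * sin (ν u)) - (x u).2 * (g u * cos (ν u))) 1 := fun u => by
    simp only [hx.periodic u, hx.speed_add_one, hx.angle_add_one, sin_add_two_pi, cos_add_two_pi]
  have hshift := hper.intervalIntegral_add_eq 0 a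
  rw [zero_add] at hshift
  rw [enclosedArea, hshift]
  exact (integral_mul_deriv_of_periodic (hx.periodic.comp Prod.fst) (hx.periodic.comp Prod.snd)
    hx.hasDerivAt_fst hx.hasDerivAt_snd (by fun_prop) (by fun_prop) a).symm

lemma enclosedArea_add_const (hx : IsClosedCurve x g ν) (v : ℝ × ℝ) :
    enclosedArea (fun u => x u + v) g ν = enclosedArea x g ν := by
  have := hx.continuous
  have := hx.continuous_angle
  have := hx.continuous_speed
  have hzero : ∫ u in (0:ℝ)..0 + 1, g u * sin (ν u) = 0 :=
    integral_deriv_eq_zero_of_periodic (hx.periodic.comp Prod.snd) hx.hasDerivAt_snd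
      (by fun_prop) 0
  calc enclosedArea (fun u => x u + v) g ν
      = ∫ u in (0:ℝ)..0 + 1, ((x u).1 * (g u * sin (ν u)) + v.1 * (g u * sin (ν u))) := by
        simp only [(hx.add_const v).enclosedArea_eq_integral 0, Prod.fst_add, add_mul]
    _ = enclosedArea x g ν := by
        rw [intervalIntegral.integral_add, intervalIntegral.integral_const_mul, hzero, mul_zero,
          add_zero, hx.enclosedArea_eq_integral 0]
        all_goals exact Continuous.intervalIntegrable (by fun_prop) _ _

lemma anisotropicLength_pos (hx : IsClosedCurve x g ν) (hσ : IsAnisotropy σ) :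
    0 < anisotropicLength σ g ν := by
  have := hx.continuous_angle
  have := hx.continuous_speed
  have := hσ.continuous
  exact intervalIntegral.intervalIntegral_pos_of_pos
    (Continuous.intervalIntegrable (by fun_prop) _ _)
    (fun u => mul_pos (hσ.pos _) (hx.speed_pos u)) zero_lt_one

lemma anisotropicLength_linearComb (hx : IsClosedCurve x g ν) (hσ : IsAnisotropy σ)
    (hμ : IsAnisotropy μ) (a b : ℝ) :
    anisotropicLength (fun s => a * σ s + b * μ s) g ν =
      a * anisotropicLength σ g ν + b * anisotropicLength μ g ν := by
  have := hx.continuous_angle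
  have := hx.continuous_speed
  have := hσ.continuous
  have := hμ.continuous
  simp only [anisotropicLength]
  rw [← intervalIntegral.integral_const_mul, ← intervalIntegral.integral_const_mul,
    ← intervalIntegral.integral_add]
  · congr 1 with u
    ring
  all_goals exact Continuous.intervalIntegrable (by fun_prop) _ _

lemma integral_eq_anisotropicLength (hx : IsClosedCurve x g ν) (hσ : IsAnisotropy σ) (a : ℝ) :
    ∫ u in a..a + 1, σ (ν u) * g u = anisotropicLength σ g ν := by
  have hper : Function.Periodic (fun u => σ (ν u) * g u) 1 := fun u => by
    simp only [hx.angle_add_one, hσ.periodic (ν u), hx.speed_add_one]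
  rw [hper.intervalIntegral_add_eq a 0, zero_add, anisotropicLength]

section Schmidt

/- A curve with the same horizontal extent as `∂W_φ` splits into an arc from its leftmost to its
rightmost point and one back; their points are paired with points of the lower, respectively upper,
half of `∂W_φ` on the same vertical line. -/
lemma exists_vertical_pairing (hx : IsClosedCurve x g ν) (hφ : IsAnisotropy φ)
    (hmin : IsLeast (Set.range fun u => (x u).1) (wulffPoint φ (-(π / 2))).1)
    (hmax : IsGreatest (Set.range fun u => (x u).1) (wulffPoint φ (π / 2)).1) :
    ∃ (a : ℝ) (Y : ℝ → ℝ), Continuous Y ∧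
      (∀ u, ((x u).1, Y u) ∈ Set.range (wulffPoint φ)) ∧
      ∫ u in a..a + 1, Y u * (g u * cos (ν u)) = -wulffArea φ := by
  have := hx.continuous
  have := hx.continuous_angle
  have := hx.continuous_speed
  have := hφ.continuous
  have := hφ.continuous_deriv_deriv
  have hw := hφ.continuous_wulffPoint
  obtain ⟨G, hGc, hG, hGmem⟩ := hφ.exists_continuous_lower_graph
  obtain ⟨H, hHc, hH, hHmem⟩ := hφ.exists_continuous_upper_graph
  have hmem u : (x u).1 ∈ Set.Icc (wulffPoint φ (-(π / 2))).1 (wulffPoint φ (π / 2)).1 :=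
    ⟨hmin.2 ⟨u, rfl⟩, hmax.2 ⟨u, rfl⟩⟩
  obtain ⟨a, ha⟩ := hmin.1
  obtain ⟨b', hb'⟩ := hmax.1
  obtain ⟨b, ⟨hab, hba⟩, hxb⟩ := hx.periodic.exists_mem_Ico zero_lt_one b' a
  have hb : (x b).1 = (wulffPoint φ (π / 2)).1 := by rw [← hxb]; exact hb'
  have hGH : G (x b).1 = H (x b).1 := by
    rw [hb]
    exact (hG Set.right_mem_uIcc).trans (hH Set.left_mem_uIcc).symm
  obtain ⟨Y, hYc, hYG, hYH⟩ := exists_continuous_glue (G := fun u => G (x u).1)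
    (H := fun u => H (x u).1) (by fun_prop) (by fun_prop) hGH
  refine ⟨a, Y, hYc, fun u => ?_, ?_⟩
  · rcases le_total u b with hu | hu
    · rw [← hYG hu]
      exact hGmem _ (hmem u)
    · rw [← hYH hu]
      exact hHmem _ (hmem u)
  have hright := integral_mul_deriv_eq_of_eqOn_comp hx.hasDerivAt_fst (by fun_prop)
    hφ.hasDerivAt_wulffPoint_fst (by fun_prop) hGc ha hb
    (hYG.mono fun u hu => (Set.uIcc_of_le hab ▸ hu).2) hG
  have hleft := integral_mul_deriv_eq_of_eqOn_comp hx.hasDerivAt_fst (by fun_prop)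
    hφ.hasDerivAt_wulffPoint_fst (by fun_prop) hHc hb
    (by rw [hx.periodic, hφ.wulffPoint_pi_div_two_add_pi, ← ha])
    (hYH.mono fun u hu => (Set.uIcc_of_le hba.le ▸ hu).1) hH
  rw [← intervalIntegral.integral_add_adjacent_intervals (b := b), hright, hleft,
    intervalIntegral.integral_add_adjacent_intervals, ← hφ.integral_wulffPoint_snd_mul (-(π / 2))]
  · ring_nf
  all_goals first
    | exact (hw.snd.mul (by fun_prop)).intervalIntegrable _ _
    | exact Continuous.intervalIntegrable (by fun_prop) _ _

lemma mul_normalHeight_le (hx : IsClosedCurve x g ν) (hφ : IsAnisotropy φ) {p : ℝ × ℝ}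
    (hp : p ∈ Set.range (wulffPoint φ)) (u : ℝ) :
    g u * normalHeight p (ν u) ≤ φ (ν u) * g u := by
  obtain ⟨t, rfl⟩ := hp
  rw [mul_comm]
  exact mul_le_mul_of_nonneg_right (hφ.normalHeight_wulffPoint_le _ _) (hx.speed_pos u).le

lemma integral_mul_normalHeight_le (hx : IsClosedCurve x g ν) (hφ : IsAnisotropy φ)
    {z : ℝ → ℝ × ℝ} (hz : Continuous z) (hzw : ∀ u, z u ∈ Set.range (wulffPoint φ)) (a : ℝ) :
    ∫ u in a..a + 1, g u * normalHeight (z u) (ν u) ≤ anisotropicLength φ g ν := by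
  have := hx.continuous_angle
  have := hx.continuous_speed
  have := hφ.continuous
  rw [← hx.integral_eq_anisotropicLength hφ a]
  refine intervalIntegral.integral_mono (by linarith) ?_ ?_
    fun u => hx.mul_normalHeight_le hφ (hzw u) u
  all_goals exact Continuous.intervalIntegrable (by fun_prop) _ _

lemma eqOn_wulffPoint_of_integral_mul_normalHeight_eq (hx : IsClosedCurve x g ν)
    (hφ : IsAnisotropy φ) {z : ℝ → ℝ × ℝ} (hz : Continuous z)
    (hzw : ∀ u, z u ∈ Set.range (wulffPoint φ)) {a : ℝ}
    (heq : ∫ u in a..a + 1, g u * normalHeight (z u) (ν u) = anisotropicLength φ g ν) :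
    Set.EqOn z (wulffPoint φ ∘ ν) (Set.Icc a (a + 1)) := by
  have := hx.continuous_angle
  have := hx.continuous_speed
  have := hφ.continuous
  intro u hu
  by_contra hne
  obtain ⟨t, ht⟩ := hzw u
  have hlt : g u * normalHeight (z u) (ν u) < φ (ν u) * g u := by
    rw [mul_comm, ← ht]
    exact mul_lt_mul_of_pos_right (hφ.normalHeight_wulffPoint_lt (by rwa [ht])) (hx.speed_pos u)
  refine heq.not_lt ?_
  rw [← hx.integral_eq_anisotropicLength hφ a]
  refine intervalIntegral.integral_lt_integral_of_continuousOn_of_le_of_exists_lt (by linarith)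
    ?_ ?_ (fun s _ => hx.mul_normalHeight_le hφ (hzw s) s) ⟨u, hu, hlt⟩
  all_goals exact Continuous.continuousOn (by fun_prop)

lemma enclosedArea_add_wulffArea_le_of_extents (hx : IsClosedCurve x g ν) (hφ : IsAnisotropy φ)
    (hmin : IsLeast (Set.range fun u => (x u).1) (wulffPoint φ (-(π / 2))).1)
    (hmax : IsGreatest (Set.range fun u => (x u).1) (wulffPoint φ (π / 2)).1) :
    enclosedArea x g ν + wulffArea φ ≤ anisotropicLength φ g ν ∧
      (enclosedArea x g ν + wulffArea φ = anisotropicLength φ g ν →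
        ∀ u, (x u).1 = (wulffPoint φ (ν u)).1) := by
  have := hx.continuous
  have := hx.continuous_angle
  have := hx.continuous_speed
  obtain ⟨a, Y, hY, hlift, hYarea⟩ := hx.exists_vertical_pairing hφ hmin hmax
  have hlift_cont : Continuous fun u => ((x u).1, Y u) := by fun_prop
  have hsum : ∫ u in a..a + 1, g u * normalHeight ((x u).1, Y u) (ν u) =
      enclosedArea x g ν + wulffArea φ := by
    rw [hx.enclosedArea_eq_integral a, ← neg_neg (wulffArea φ), ← hYarea, ← sub_eq_add_neg,
      ← intervalIntegral.integral_sub]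
    · congr 1 with u
      rw [normalHeight]
      ring
    all_goals exact Continuous.intervalIntegrable (by fun_prop) _ _
  refine ⟨hsum ▸ hx.integral_mul_normalHeight_le hφ hlift_cont hlift a, fun heq u => ?_⟩
  have hper : Function.Periodic (fun u => (x u).1 - (wulffPoint φ (ν u)).1) 1 := fun u => by
    simp only [hx.periodic u, hx.angle_add_one, hφ.periodic_wulffPoint (ν u)]
  obtain ⟨u', hu', huu'⟩ := hper.exists_mem_Ico zero_lt_one u a
  have hzero := congrArg Prod.fst <| hx.eqOn_wulffPoint_of_integral_mul_normalHeight_eq hφ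
    hlift_cont hlift (hsum.trans heq) (Set.Ico_subset_Icc_self hu')
  exact sub_eq_zero.1 (huu'.trans (sub_eq_zero.2 hzero))

lemma exists_extents (hx : IsClosedCurve x g ν) :
    ∃ m M, m < M ∧ IsLeast (Set.range fun u => (x u).1) m ∧
      IsGreatest (Set.range fun u => (x u).1) M := by
  have hcompact : IsCompact (Set.range fun u => (x u).1) :=
    (hx.periodic.comp Prod.fst).compact_of_continuous one_ne_zero hx.continuous.fst
  obtain ⟨m, hm⟩ := hcompact.exists_isLeast (Set.range_nonempty _)
  obtain ⟨M, hM⟩ := hcompact.exists_isGreatest (Set.range_nonempty _)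
  refine ⟨m, M, (hm.2 hM.1).lt_of_ne fun hmM => ?_, hm, hM⟩
  obtain ⟨u, hu⟩ := hx.surjective_angle 0
  have hconst : (fun u => (x u).1) = fun _ => m :=
    funext fun u => le_antisymm (hmM ▸ hM.2 ⟨u, rfl⟩) (hm.2 ⟨u, rfl⟩)
  have hderiv := hx.hasDerivAt_fst u
  rw [hconst, hu, cos_zero, mul_one] at hderiv
  exact (hx.speed_pos u).ne (hderiv.unique (hasDerivAt_const u m)).symm

lemma exists_scale_enclosedArea_add_le (hx : IsClosedCurve x g ν) (hφ : IsAnisotropy φ) :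
    ∃ r > 0, enclosedArea x g ν + r ^ 2 * wulffArea φ ≤ r * anisotropicLength φ g ν ∧
      (enclosedArea x g ν + r ^ 2 * wulffArea φ = r * anisotropicLength φ g ν →
        ∃ c, ∀ u, (x u).1 = r * (wulffPoint φ (ν u)).1 + c) := by
  obtain ⟨m, M, hmM, hm, hM⟩ := hx.exists_extents
  have hπ := pi_pos
  have hwidth : (wulffPoint φ (-(π / 2))).1 < (wulffPoint φ (π / 2)).1 :=
    hφ.strictMonoOn_wulffPoint_fst ⟨le_rfl, by linarith⟩ ⟨by linarith, le_rfl⟩ (by linarith)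
  set r := (M - m) / ((wulffPoint φ (π / 2)).1 - (wulffPoint φ (-(π / 2))).1) with hr_def
  have hr : 0 < r := div_pos (sub_pos.2 hmM) (sub_pos.2 hwidth)
  set c := m - r * (wulffPoint φ (-(π / 2))).1 with hc
  have hmc : m - c = r * (wulffPoint φ (-(π / 2))).1 := by rw [hc, sub_sub_cancel]
  have hMc : M - c = r * (wulffPoint φ (π / 2)).1 := by
    have hwidth_mul := div_mul_cancel₀ (M - m) (sub_pos.2 hwidth).ne'
    rw [← hr_def] at hwidth_mul
    linarith
  have hrange : (Set.range fun u => (x u + (-c, 0)).1) =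
      (fun y => y - c) '' Set.range fun u => (x u).1 := by
    rw [← Set.range_comp]
    rfl
  have hmono : Monotone fun y : ℝ => y - c := fun _ _ hle => sub_le_sub_right hle c
  have hkey := (hx.add_const (-c, 0)).enclosedArea_add_wulffArea_le_of_extents
    (hφ.const_mul hr)
    (by rw [hrange, wulffPoint_const_mul, Prod.smul_fst, smul_eq_mul, ← hmc]
        exact hmono.map_isLeast hm)
    (by rw [hrange, wulffPoint_const_mul, Prod.smul_fst, smul_eq_mul, ← hMc]
        exact hmono.map_isGreatest hM)
  simp only [hx.enclosedArea_add_const, wulffArea_const_mul, anisotropicLength_const_mul,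
    wulffPoint_const_mul, Prod.fst_add, Prod.smul_fst, smul_eq_mul, ← sub_eq_add_neg,
    sub_eq_iff_eq_add] at hkey
  exact ⟨r, hr, hkey.1, fun heq => ⟨c, hkey.2 heq⟩⟩

end Schmidt

section WulffInequality

lemma wulff_inequality (hx : IsClosedCurve x g ν) (hφ : IsAnisotropy φ) :
    4 * wulffArea φ * enclosedArea x g ν ≤ anisotropicLength φ g ν ^ 2 := by
  obtain ⟨r, -, hle, -⟩ := hx.exists_scale_enclosedArea_add_le hφ
  nlinarith [sq_nonneg (anisotropicLength φ g ν - 2 * r * wulffArea φ), hφ.wulffArea_pos]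

lemma exists_fst_eq_of_wulff_equality (hx : IsClosedCurve x g ν) (hφ : IsAnisotropy φ)
    (heq : 4 * wulffArea φ * enclosedArea x g ν = anisotropicLength φ g ν ^ 2) :
    ∃ c, ∀ u, (x u).1 =
      anisotropicLength φ g ν / (2 * wulffArea φ) * (wulffPoint φ (ν u)).1 + c := by
  obtain ⟨r, -, hle, hscale⟩ := hx.exists_scale_enclosedArea_add_le hφ
  have hW := hφ.wulffArea_pos
  have hsquare : (anisotropicLength φ g ν - 2 * r * wulffArea φ) ^ 2 = 0 := by
    refine le_antisymm ?_ (sq_nonneg _)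
    nlinarith
  have hL : anisotropicLength φ g ν = r * (2 * wulffArea φ) := by
    linarith [pow_eq_zero_iff two_ne_zero |>.1 hsquare]
  rw [hL, mul_div_cancel_right₀ _ (by positivity)]
  refine hscale (mul_left_cancel₀ hW.ne' ?_)
  rw [hL] at heq ⊢
  linarith

lemma exists_eq_wulffPoint_of_wulff_equality (hx : IsClosedCurve x g ν) (hφ : IsAnisotropy φ)
    (heq : 4 * wulffArea φ * enclosedArea x g ν = anisotropicLength φ g ν ^ 2) :
    ∃ r : ℝ, 0 < r ∧ ∃ v : ℝ × ℝ, ∀ u, x u = r • wulffPoint φ (ν u) + v := by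
  obtain ⟨c, hc⟩ := hx.exists_fst_eq_of_wulff_equality hφ heq
  obtain ⟨d, hd⟩ := hx.quarterTurn.exists_fst_eq_of_wulff_equality
    (hφ.comp_add_const (π / 2)) <| by
    rwa [enclosedArea_quarterTurn, anisotropicLength_comp_add_const, hφ.wulffArea_comp_add_const]
  refine ⟨anisotropicLength φ g ν / (2 * wulffArea φ),
    div_pos (hx.anisotropicLength_pos hφ) (mul_pos two_pos hφ.wulffArea_pos), (c, d),
    fun u => Prod.ext (hc u) ?_⟩
  simpa [anisotropicLength_comp_add_const, hφ.wulffArea_comp_add_const,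
    wulffPoint_comp_add_pi_div_two] using hd u

end WulffInequality

section WulffCurve

lemma hasDerivAt_angle (hx : IsClosedCurve x g ν) (hφ : IsAnisotropy φ) {c : ℝ} (hc : c ≠ 0)
    (hxw : ∀ u, x u = c • wulffPoint φ (ν u)) (u : ℝ) :
    HasDerivAt ν (g u / (c * (φ (ν u) + deriv (deriv φ) (ν u)))) u := by
  have hcurve := hasDerivAt_normalHeight (hx.hasDerivAt u) (ν u + π / 2)
  have hwulff :=
    (hasDerivAt_normalHeight (hφ.hasDerivAt_wulffPoint (ν u)) (ν u + π / 2)).const_mul c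
  rw [add_sub_cancel_left, sin_pi_div_two, mul_one] at hcurve hwulff
  refine HasDerivAt.of_comp_left hx.continuous_angle.continuousAt hwulff hcurve
    (mul_ne_zero hc (hφ.convex _).ne') (.of_forall fun s => ?_)
  simp only [Function.comp_apply, hxw s, normalHeight_smul]

lemma eq_or_eq_wulffPoint_of_mem_range (hx : IsClosedCurve x g ν) (hφ : IsAnisotropy φ)
    (hmem : ∀ u, x u ∈ Set.range (wulffPoint φ)) (u : ℝ) :
    x u = wulffPoint φ (ν u) ∨ x u = wulffPoint φ (ν u + π) := by
  obtain ⟨t, ht⟩ := hmem u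
  have hmax : IsLocalMax (fun s => normalHeight (x s) t) u := .of_forall fun s => by
    obtain ⟨s', hs'⟩ := hmem s
    simp only [← hs', ← ht, normalHeight_wulffPoint_self]
    exact hφ.normalHeight_wulffPoint_le t s'
  have hcrit := hmax.hasDerivAt_eq_zero (hasDerivAt_normalHeight (hx.hasDerivAt u) t)
  obtain ⟨n, hn⟩ := sin_eq_zero_iff.1 ((mul_eq_zero.1 hcrit).resolve_left (hx.speed_pos u).ne')
  rw [← ht]
  rcases n.even_or_odd' with ⟨k, rfl | rfl⟩
  · left
    rw [← hφ.periodic_wulffPoint.int_mul k (ν u)]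
    congr 1
    push_cast at hn
    linarith
  · right
    rw [← hφ.periodic_wulffPoint.int_mul k (ν u + π)]
    congr 1
    push_cast at hn
    linarith

lemma not_forall_eq_wulffPoint_angle_add_pi (hx : IsClosedCurve x g ν) (hφ : IsAnisotropy φ) :
    ¬ ∀ u, x u = wulffPoint φ (ν u + π) := fun hopp => by
  have hderiv := hx.hasDerivAt_angle (hφ.comp_add_const π) (c := -1) (by norm_num) fun u => by
    rw [wulffPoint_comp_add_pi, neg_one_smul, neg_neg, hopp u]
  have hanti : StrictAnti ν := strictAnti_of_hasDerivAt_neg hderiv fun u =>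
    div_neg_of_pos_of_neg (hx.speed_pos u)
      (mul_neg_of_neg_of_pos (by norm_num) ((hφ.comp_add_const π).convex _))
  have hlt := hanti (lt_add_one (0 : ℝ))
  rw [hx.angle_add_one] at hlt
  linarith [pi_pos]

/- The two alternatives give `normalHeight (x u) (ν u)` opposite signs, so the curve cannot switch
from one to the other. -/
lemma eq_wulffPoint_angle_of_mem_range (hx : IsClosedCurve x g ν) (hφ : IsAnisotropy φ)
    (hmem : ∀ u, x u ∈ Set.range (wulffPoint φ)) (u : ℝ) : x u = wulffPoint φ (ν u) := by
  have halt := hx.eq_or_eq_wulffPoint_of_mem_range hφ hmem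
  have hopp_neg s (hs : x s = wulffPoint φ (ν s + π)) : normalHeight (x s) (ν s) < 0 := by
    rw [← neg_neg (normalHeight _ _), ← normalHeight_add_pi, hs, normalHeight_wulffPoint_self]
    exact neg_neg_of_pos (hφ.pos _)
  have hsame_pos s (hs : x s = wulffPoint φ (ν s)) : 0 < normalHeight (x s) (ν s) := by
    rw [hs, normalHeight_wulffPoint_self]
    exact hφ.pos _
  have hcont : Continuous fun s => normalHeight (x s) (ν s) :=
    continuous_normalHeight hx.continuous hx.continuous_angle
  refine (halt u).resolve_right fun hu => hx.not_forall_eq_wulffPoint_angle_add_pi hφ fun s =>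
    (halt s).resolve_left fun hs => ?_
  obtain ⟨z, -, hz⟩ := intermediate_value_uIcc hcont.continuousOn
    (Set.Icc_subset_uIcc ⟨(hopp_neg u hu).le, (hsame_pos s hs).le⟩)
  rcases halt z with hzw | hzw
  · exact (hsame_pos z hzw).ne' hz
  · exact (hopp_neg z hzw).ne hz

lemma anisotropicLength_eq_mixedWulffEnergy (hx : IsClosedCurve x g ν) (hσ : IsAnisotropy σ)
    (hφ : IsAnisotropy φ) (hxw : ∀ u, x u = wulffPoint φ (ν u)) :
    anisotropicLength σ g ν = mixedWulffEnergy σ φ := by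
  have := hx.continuous_angle
  have := hx.continuous_speed
  have := hσ.continuous
  have := hφ.continuous
  have := hφ.continuous_deriv_deriv
  have hderiv := hx.hasDerivAt_angle hφ one_ne_zero fun u => (hxw u).trans (one_smul _ _).symm
  simp only [one_mul] at hderiv
  have hconvex u := (hφ.convex (ν u)).ne'
  rw [← hσ.integral_eq_mixedWulffEnergy hφ (ν 0), ← hx.angle_add_one, zero_add,
    ← intervalIntegral.integral_comp_mul_deriv (fun u _ => hderiv u)
      (Continuous.continuousOn (by fun_prop (disch := exact hconvex _))) (by fun_prop),
    anisotropicLength]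
  congr 1 with u
  have := hconvex u
  simp only [Function.comp_apply]
  field_simp

lemma enclosedArea_eq_wulffArea (hx : IsClosedCurve x g ν) (hφ : IsAnisotropy φ)
    (hxw : ∀ u, x u = wulffPoint φ (ν u)) : enclosedArea x g ν = wulffArea φ := by
  have hlength := hx.anisotropicLength_eq_mixedWulffEnergy hφ hφ hxw
  rw [mixedWulffEnergy_self, anisotropicLength] at hlength
  rw [← mul_right_inj' (two_ne_zero (α := ℝ)), ← hlength, enclosedArea, ← mul_assoc,
    mul_one_div_cancel two_ne_zero, one_mul]
  congr 1 with u
  rw [← normalHeight_wulffPoint_self φ (ν u), ← hxw u, normalHeight]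
  ring

end WulffCurve

section MixedInequality

lemma mixed_anisoperimetric_deficit (hx : IsClosedCurve x g ν) (hσ : IsAnisotropy σ)
    (hμ : IsAnisotropy μ) :
    (√(wulffArea σ) * anisotropicLength μ g ν - √(wulffArea μ) * anisotropicLength σ g ν) ^ 2 *
        enclosedArea x g ν ≤
      anisotropicLength σ g ν * anisotropicLength μ g ν *
        (anisotropicLength σ g ν * anisotropicLength μ g ν -
          (2 * √(wulffArea σ * wulffArea μ) + mixedWulffEnergy σ μ) * enclosedArea x g ν) := by
  have hLσ := hx.anisotropicLength_pos hσ
  have hLμ := hx.anisotropicLength_pos hμ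
  have hwulff := hx.wulff_inequality (hσ.linearComb hμ hLμ hLσ)
  rw [hσ.wulffArea_linearComb hμ hLμ hLσ, hx.anisotropicLength_linearComb hσ hμ,
    ← sq_sqrt hσ.wulffArea_pos.le, ← sq_sqrt hμ.wulffArea_pos.le] at hwulff
  rw [sqrt_mul hσ.wulffArea_pos.le]
  linarith

lemma exists_eq_wulffPoint_of_mixed_equality (hx : IsClosedCurve x g ν) (hσ : IsAnisotropy σ)
    (hμ : IsAnisotropy μ)
    (heq : anisotropicLength σ g ν * anisotropicLength μ g ν =
      (2 * √(wulffArea σ * wulffArea μ) + mixedWulffEnergy σ μ) * enclosedArea x g ν) :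
    ∃ r : ℝ, 0 < r ∧ ∃ v : ℝ × ℝ, ∀ u, x u =
      r • wulffPoint (fun s => √(wulffArea μ) * σ s + √(wulffArea σ) * μ s) (ν u) + v := by
  have ha := sqrt_pos.2 hσ.wulffArea_pos
  have hb := sqrt_pos.2 hμ.wulffArea_pos
  have hproduct := mul_pos (hx.anisotropicLength_pos hσ) (hx.anisotropicLength_pos hμ)
  have hconst : 0 ≤ 2 * √(wulffArea σ * wulffArea μ) + mixedWulffEnergy σ μ :=
    add_nonneg (by positivity) (hσ.mixedWulffEnergy_pos hμ).le
  have harea : 0 < enclosedArea x g ν := pos_of_mul_pos_right (heq ▸ hproduct) hconst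
  have hdeficit := hx.mixed_anisoperimetric_deficit hσ hμ
  rw [heq, sub_self, mul_zero] at hdeficit
  have hratio : √(wulffArea σ) * anisotropicLength μ g ν =
      √(wulffArea μ) * anisotropicLength σ g ν :=
    sub_eq_zero.1 <| sq_nonpos_iff _ |>.1 <| nonpos_of_mul_nonpos_left hdeficit harea
  refine hx.exists_eq_wulffPoint_of_wulff_equality (hσ.linearComb hμ hb ha) ?_
  rw [hσ.wulffArea_linearComb hμ hb ha, hx.anisotropicLength_linearComb hσ hμ]
  rw [sqrt_mul hσ.wulffArea_pos.le] at heq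
  have hWσ := sq_sqrt hσ.wulffArea_pos.le
  have hWμ := sq_sqrt hμ.wulffArea_pos.le
  set a := √(wulffArea σ)
  set b := √(wulffArea μ)
  linear_combination (-4 * enclosedArea x g ν * b ^ 2) * hWσ
    - 4 * enclosedArea x g ν * a ^ 2 * hWμ - 4 * a * b * heq
    - (a * anisotropicLength μ g ν - b * anisotropicLength σ g ν) * hratio

lemma mixed_equality_of_forall_mem_range (hx : IsClosedCurve x g ν) (hσ : IsAnisotropy σ)
    (hμ : IsAnisotropy μ) {c : ℝ} (hc : 0 < c) {v : ℝ × ℝ}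
    (hrange : ∀ u, x u ∈ Set.range fun t =>
      c • wulffPoint (fun s => √(wulffArea μ) * σ s + √(wulffArea σ) * μ s) t + v) :
    anisotropicLength σ g ν * anisotropicLength μ g ν =
      (2 * √(wulffArea σ * wulffArea μ) + mixedWulffEnergy σ μ) * enclosedArea x g ν := by
  have ha := mul_pos hc (sqrt_pos.2 hσ.wulffArea_pos)
  have hb := mul_pos hc (sqrt_pos.2 hμ.wulffArea_pos)
  have hφ := hσ.linearComb hμ hb ha
  have hy := hx.add_const (-v)
  have hyw := hy.eq_wulffPoint_angle_of_mem_range hφ fun u => by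
    obtain ⟨t, ht⟩ := hrange u
    refine ⟨t, ?_⟩
    simp only [← ht, ← wulffPoint_const_mul, mul_add, ← mul_assoc, add_neg_cancel_right]
  rw [← hx.enclosedArea_add_const (-v), hy.enclosedArea_eq_wulffArea hφ hyw,
    hy.anisotropicLength_eq_mixedWulffEnergy hσ hφ hyw,
    hy.anisotropicLength_eq_mixedWulffEnergy hμ hφ hyw, hσ.wulffArea_linearComb hμ hb ha,
    hσ.mixedWulffEnergy_linearComb_right hμ hσ hb ha,
    hσ.mixedWulffEnergy_linearComb_right hμ hμ hb ha, mixedWulffEnergy_self,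
    mixedWulffEnergy_self, hμ.mixedWulffEnergy_comm hσ, sqrt_mul hσ.wulffArea_pos.le]
  have hWσ := sq_sqrt hσ.wulffArea_pos.le
  have hWμ := sq_sqrt hμ.wulffArea_pos.le
  set a := √(wulffArea σ)
  set b := √(wulffArea μ)
  linear_combination
    -c ^ 2 * (b ^ 2 * mixedWulffEnergy σ μ + 2 * a * b * wulffArea μ) * hWσ
      - c ^ 2 * (a ^ 2 * mixedWulffEnergy σ μ + 2 * a * b * wulffArea σ) * hWμ

end MixedInequality

end IsClosedCurve

theorem mixed_anisoperimetric_equality_case_general {σ μ g ν : ℝ → ℝ} {x : ℝ → ℝ × ℝ}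
    (hσ : IsAnisotropy σ) (hμ : IsAnisotropy μ) (hx : IsClosedCurve x g ν) :
    anisotropicLength σ g ν * anisotropicLength μ g ν =
        (2 * √(wulffArea σ * wulffArea μ) + mixedWulffEnergy σ μ) * enclosedArea x g ν ↔
      ∃ c : ℝ, 0 < c ∧ ∃ v : ℝ × ℝ, Set.range x = Set.range fun t =>
        c • wulffPoint (fun s => √(wulffArea μ) * σ s + √(wulffArea σ) * μ s) t + v := by
  refine ⟨fun heq => ?_, fun ⟨c, hc, v, hrange⟩ =>
    hx.mixed_equality_of_forall_mem_range hσ hμ hc (hrange ▸ Set.mem_range_self)⟩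
  obtain ⟨c, hc, v, hxw⟩ := hx.exists_eq_wulffPoint_of_mixed_equality hσ hμ heq
  refine ⟨c, hc, v, ?_⟩
  rw [funext hxw]
  exact hx.surjective_angle.range_comp fun t =>
    c • wulffPoint (fun s => √(wulffArea μ) * σ s + √(wulffArea σ) * μ s) t + v

/-- Equality case of the mixed anisoperimetric inequality:
`L_σ(Γ)·L_μ(Γ) = (2√(|W_σ|·|W_μ|) + L_σ(∂W_μ))·A(Γ)` holds iff `Γ` is homothetically
similar to the Wulff boundary `∂W_{σ̃}` with `σ̃ = √|W_μ|·σ + √|W_σ|·μ`. -/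
theorem mixed_anisoperimetric_equality_case
    (σ μ : ℝ → ℝ)
    (hσs : ContDiff ℝ (⊤ : ℕ∞) σ) (hσper : ∀ ν, σ (ν + 2 * π) = σ ν)
    (hσpos : ∀ ν, 0 < σ ν) (hσconv : ∀ ν, 0 < σ ν + deriv (deriv σ) ν)
    (hμs : ContDiff ℝ (⊤ : ℕ∞) μ) (hμper : ∀ ν, μ (ν + 2 * π) = μ ν)
    (hμpos : ∀ ν, 0 < μ ν) (hμconv : ∀ ν, 0 < μ ν + deriv (deriv μ) ν)
    -- a closed curve `x` with speed `g` and tangent-angle lift `ν`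
    (x : ℝ → ℝ × ℝ) (g ν : ℝ → ℝ)
    (hx : ContDiff ℝ 2 x)
    (hxper : ∀ u, x (u + 1) = x u)
    (hg : ∀ u, 0 < g u)
    (htang : ∀ u, HasDerivAt x (g u • ((Real.cos (ν u), Real.sin (ν u)) : ℝ × ℝ)) u)
    (hνc : Continuous ν)
    (hνper : ∀ u, ν (u + 1) = ν u + 2 * π)
    (hinj : Set.InjOn x (Set.Ico 0 1))
    -- positive enclosed area
    (hA : 0 < (1 / 2) * ∫ u in (0:ℝ)..1,
        ((x u).1 * (g u * Real.sin (ν u)) - (x u).2 * (g u * Real.cos (ν u)))) :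
    ((∫ u in (0:ℝ)..1, σ (ν u) * g u) * (∫ u in (0:ℝ)..1, μ (ν u) * g u) =
      (2 * Real.sqrt (wulffArea σ * wulffArea μ) + mixedWulffEnergy σ μ) *
        ((1 / 2) * ∫ u in (0:ℝ)..1,
          ((x u).1 * (g u * Real.sin (ν u)) - (x u).2 * (g u * Real.cos (ν u)))))
    ↔ (∃ c : ℝ, 0 < c ∧ ∃ v : ℝ × ℝ,
        Set.range x = Set.range (fun t : ℝ =>
          c • wulffPoint
            (fun s => Real.sqrt (wulffArea μ) * σ s + Real.sqrt (wulffArea σ) * μ s) t + v)) :=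
  mixed_anisoperimetric_equality_case_general ⟨contDiff_infty.1 hσs 2, hσper, hσpos, hσconv⟩
    ⟨contDiff_infty.1 hμs 2, hμper, hμpos, hμconv⟩
    ⟨hx.of_le one_le_two, hxper, hg, htang, hνc, hνper⟩
end

section
/- Convexity preservation for the anisoperimetric ratio gradient flow: let σ be an anisotropy function and let x : ℝ × [0,T) → ℝ² be a smooth family of closed curves evolving by the anisoperimetric ratio gradient flow ∂_t x = β N with β = k_σ − L_σ(t)/(2A(t)), and assume that for every t* < T, inf_{0 ≤ t ≤ t*} L_σ(t) > 0. If k(u, t₀) > 0 for all u at some time t₀ ∈ [0,T), then k(u, t) > 0 for all u and all t ∈ [t₀, T). -/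
open Real

/-- Anisotropic length `L_σ(t) = ∫₀¹ σ(ν(u,t))|∂_u x(u,t)| du` of the curve `x(·,t)`
with speed `g(·,t)` and tangent-angle lift `νf(·,t)`. -/
noncomputable def aLenF (σ : ℝ → ℝ) (g νf : ℝ → ℝ → ℝ) (t : ℝ) : ℝ :=
  ∫ u in (0:ℝ)..1, σ (νf u t) * g u t

/-- Enclosed area `A(t) = (1/2)∫₀¹ det(x(u,t), ∂_u x(u,t)) du`, with
`∂_u x = g·(cos νf, sin νf)`. -/
noncomputable def areaF (x : ℝ → ℝ → ℝ × ℝ) (g νf : ℝ → ℝ → ℝ) (t : ℝ) : ℝ :=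
  (1 / 2) * ∫ u in (0:ℝ)..1,
    ((x u t).1 * (g u t * Real.sin (νf u t)) - (x u t).2 * (g u t * Real.cos (νf u t)))

/-!
Let `β = φ(ν) k - F(t)` be the normal speed, with `φ = σ + σ''` and `F = L_σ / (2A)`. Commuting the
two partial derivatives of `x` gives `∂_t g = -β g k` and `g ∂_t ν = ∂_u β`; commuting those of `ν`
then gives the curvature equation `∂_t k = ∂_s² β + β k²`, where `∂_s = g⁻¹ ∂_u`. Since `F` depends
on time alone, `w = φ(ν) k` and `β` have the same spatial minima; there `∂_t ν = 0` and
`∂_s² β ≥ 0`, so `∂_t w ≥ (β k) w`. On compact time intervals `β k` is bounded below, and `w > 0`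
persists by comparison with a decaying exponential.
-/

section MinimumPrinciple

open Set

lemma deriv_deriv_nonneg_of_isLocalMin {f : ℝ → ℝ} {a : ℝ} (hf : ContinuousAt f a)
    (hmin : IsLocalMin f a) : 0 ≤ deriv (deriv f) a := by
  by_contra! hneg
  have hmax : IsLocalMax f a := isLocalMax_of_deriv_deriv_neg hneg hmin.deriv_eq_zero hf
  have hconst : f =ᶠ[nhds a] fun _ => f a := by
    filter_upwards [hmin, hmax] with y hle hge using le_antisymm hge hle
  have hzero : deriv (deriv f) a = 0 := by simpa using hconst.deriv.deriv_eq
  exact hneg.ne hzero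

lemma nonpos_of_isMinOn_Icc_right {f : ℝ → ℝ} {a t d : ℝ} (hat : a < t)
    (hmin : IsMinOn f (Icc a t) t) (hd : HasDerivWithinAt f d (Icc a t) t) : d ≤ 0 := by
  have hdir : a - t ∈ posTangentConeAt (Icc a t) t :=
    sub_mem_posTangentConeAt_of_segment_subset (by rw [segment_symm, segment_eq_Icc hat.le])
  have hprod : 0 ≤ (a - t) * d := by
    simpa using hmin.localize.hasFDerivWithinAt_nonneg hd.hasFDerivWithinAt hdir
  exact nonpos_of_mul_nonneg_right hprod (sub_neg.mpr hat)

variable {X : Type*} [TopologicalSpace X] [CompactSpace X] {a b : ℝ}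

lemma exists_first_zero {w : X → ℝ → ℝ}
    (hw : ContinuousOn (fun p : X × ℝ => w p.1 p.2) (univ ×ˢ Icc a b))
    (ha : ∀ x, 0 < w x a) (hneg : ∃ t ∈ Icc a b, ∃ x, w x t ≤ 0) :
    ∃ t ∈ Ioc a b, ∃ x, w x t = 0 ∧ ∀ s ∈ Icc a t, ∀ y, 0 ≤ w y s := by
  have hdom : IsCompact (univ ×ˢ Icc a b : Set (X × ℝ)) := isCompact_univ.prod isCompact_Icc
  set S := (univ ×ˢ Icc a b) ∩ (fun p : X × ℝ => w p.1 p.2) ⁻¹' Iic 0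
  have hS : IsCompact S := hdom.of_isClosed_subset
    (hw.preimage_isClosed_of_isClosed (isClosed_univ.prod isClosed_Icc) isClosed_Iic)
    inter_subset_left
  obtain ⟨r, hr, y, hy⟩ := hneg
  obtain ⟨⟨x, t⟩, ⟨⟨-, ht⟩, hxt⟩, hfirst⟩ :=
    hS.exists_isMinOn ⟨(y, r), ⟨trivial, hr⟩, hy⟩ continuous_snd.continuousOn
  have hat : a < t := ht.1.lt_of_ne fun h => (ha x).not_ge (h ▸ hxt)
  have hbefore : ∀ s ∈ Ico a t, ∀ y, 0 ≤ w y s := by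
    intro s hs y
    by_contra! hys
    exact hs.2.not_ge (hfirst (a := (y, s)) ⟨⟨trivial, hs.1, hs.2.le.trans ht.2⟩, hys.le⟩)
  have hupto : ∀ s ∈ Icc a t, ∀ y, 0 ≤ w y s := by
    intro s hs y
    have hslice : ContinuousOn (w y) (closure (Ico a t)) := by
      rw [closure_Ico hat.ne]
      exact hw.comp (f := fun s => (y, s)) (by fun_prop)
        fun s hs => ⟨trivial, hs.1, hs.2.trans ht.2⟩
    exact le_on_closure (fun s hs => hbefore s hs y) continuousOn_const hslice
      (by rwa [closure_Ico hat.ne])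
  exact ⟨t, ⟨hat, ht.2⟩, x, le_antisymm hxt (hupto t ⟨hat.le, le_rfl⟩ x), hupto⟩

lemma pos_of_deriv_pos_of_zero_min {w : X → ℝ → ℝ}
    (hw : ContinuousOn (fun p : X × ℝ => w p.1 p.2) (univ ×ˢ Icc a b))
    (ha : ∀ x, 0 < w x a)
    (hstep : ∀ t ∈ Ioc a b, ∀ x, w x t = 0 → (∀ y, 0 ≤ w y t) →
      ∃ d, HasDerivWithinAt (w x) d (Icc a b) t ∧ 0 < d) :
    ∀ t ∈ Icc a b, ∀ x, 0 < w x t := by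
  by_contra! hneg
  obtain ⟨t, ht, x, hxt, hnonneg⟩ := exists_first_zero hw ha hneg
  obtain ⟨d, hd, hdpos⟩ := hstep t ht x hxt (hnonneg t ⟨ht.1.le, le_rfl⟩)
  have hmin : IsMinOn (w x) (Icc a t) t := fun s hs => hxt.trans_le (hnonneg s hs x)
  exact hdpos.not_ge
    (nonpos_of_isMinOn_Icc_right ht.1 hmin (hd.mono (Icc_subset_Icc_right ht.2)))

lemma pos_of_mul_le_deriv_of_min {h : X → ℝ → ℝ} {c : ℝ}
    (hh : ContinuousOn (fun p : X × ℝ => h p.1 p.2) (univ ×ˢ Icc a b))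
    (ha : ∀ x, 0 < h x a)
    (hstep : ∀ t ∈ Ioc a b, ∀ x, (∀ y, h x t ≤ h y t) → 0 < h x t →
      ∃ d, HasDerivWithinAt (h x) d (Icc a b) t ∧ c * h x t ≤ d) :
    ∀ t ∈ Icc a b, ∀ x, 0 < h x t := by
  intro t ht
  have hslice : Continuous fun x => h x a := by
    rw [← continuousOn_univ]
    exact hh.comp (f := fun x => (x, a)) (by fun_prop)
      fun x _ => ⟨trivial, le_rfl, ht.1.trans ht.2⟩
  obtain ⟨δ, hδ, hδh⟩ := isCompact_univ.exists_forall_le' hslice.continuousOn fun x _ => ha x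
  obtain ⟨ε, hε, hεδ⟩ := exists_between hδ
  -- Decaying faster than the rate `c` makes the comparison at a first contact strict.
  set barrier : ℝ → ℝ := fun s => ε * exp ((c - 1) * (s - a)) with hbarrier
  have hbpos : ∀ s, 0 < barrier s := fun s => mul_pos hε (exp_pos _)
  have hbderiv : ∀ s, HasDerivAt barrier ((c - 1) * barrier s) s := by
    intro s
    have hlin : HasDerivAt (fun s => (c - 1) * (s - a)) (c - 1) s := by
      simpa using ((hasDerivAt_id s).sub_const a).const_mul (c - 1)
    exact (hlin.exp.const_mul ε).congr_deriv (by simp only [hbarrier]; ring)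
  have habove : ∀ s ∈ Icc a b, ∀ x, 0 < h x s - barrier s := by
    refine pos_of_deriv_pos_of_zero_min (hh.sub (by fun_prop)) (fun x => ?_)
      fun s hs x hzero hmin => ?_
    · simpa [hbarrier] using hεδ.trans_le (hδh x trivial)
    · have hcontact : h x s = barrier s := sub_eq_zero.mp hzero
      obtain ⟨d, hd, hcd⟩ := hstep s hs x
        (fun y => hcontact.trans_le (sub_nonneg.mp (hmin y))) (hcontact ▸ hbpos s)
      refine ⟨_, hd.sub (hbderiv s).hasDerivWithinAt, ?_⟩
      rw [hcontact] at hcd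
      linarith [hbpos s]
  exact fun x => (hbpos t).trans (sub_pos.mp (habove t ht x))

lemma pos_of_periodic_of_mul_le_deriv_of_isLocalMin {h C : ℝ → ℝ → ℝ}
    (hh : ContinuousOn (fun p : ℝ × ℝ => h p.1 p.2) (univ ×ˢ Icc a b))
    (hC : ContinuousOn (fun p : ℝ × ℝ => C p.1 p.2) (univ ×ˢ Icc a b))
    (hper : ∀ t ∈ Icc a b, Function.Periodic (fun u => h u t) 1)
    (ha : ∀ u, 0 < h u a)
    (hstep : ∀ t ∈ Ioc a b, ∀ u, IsLocalMin (fun v => h v t) u →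
      ∃ d, HasDerivWithinAt (h u) d (Icc a b) t ∧ C u t * h u t ≤ d) :
    ∀ t ∈ Icc a b, ∀ u, 0 < h u t := by
  have hcell : ∀ t ∈ Icc a b, ∀ u, ∃ v : Icc (0 : ℝ) 1, h u t = h v t := by
    intro t ht u
    obtain ⟨v, hv, huv⟩ := (hper t ht).exists_mem_Ico₀ one_pos u
    exact ⟨⟨v, Ico_subset_Icc_self hv⟩, huv⟩
  obtain ⟨c, hc⟩ := (isCompact_Icc.prod isCompact_Icc).bddBelow_image
    (hC.mono (prod_mono_left (subset_univ (Icc (0 : ℝ) 1))))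
  have hpos : ∀ t ∈ Icc a b, ∀ v : Icc (0 : ℝ) 1, 0 < h v t := by
    refine pos_of_mul_le_deriv_of_min (c := c) ?_ (fun v => ha v) fun t ht v hmin hvpos => ?_
    · exact hh.comp (f := fun p : Icc (0 : ℝ) 1 × ℝ => ((p.1 : ℝ), p.2)) (by fun_prop)
        fun p hp => ⟨trivial, hp.2⟩
    · have hlocal : IsLocalMin (fun u => h u t) v := Filter.Eventually.of_forall fun u => by
        obtain ⟨y, hy⟩ := hcell t (Ioc_subset_Icc_self ht) u
        exact (hmin y).trans_eq hy.symm
      obtain ⟨d, hd, hCd⟩ := hstep t ht v hlocal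
      have hcC : c ≤ C v t := hc ⟨(↑v, t), ⟨v.2, Ioc_subset_Icc_self ht⟩, rfl⟩
      exact ⟨d, hd, (mul_le_mul_of_nonneg_right hcC hvpos.le).trans hCd⟩
  intro t ht u
  obtain ⟨v, hv⟩ := hcell t ht u
  exact hv ▸ hpos t ht v

end MinimumPrinciple

section PartialDerivatives

open Set

variable {E : Type*} [NormedAddCommGroup E] [NormedSpace ℝ E] {f fu ft : ℝ → ℝ → E}
  {S I : Set ℝ} {u t : ℝ}

lemma hasDerivWithinAt_fst_of_hasFDerivWithinAt {L : ℝ × ℝ →L[ℝ] E}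
    (hf : HasFDerivWithinAt (fun p : ℝ × ℝ => f p.1 p.2) L (S ×ˢ I) (u, t)) (ht : t ∈ I) :
    HasDerivWithinAt (fun v => f v t) (L (1, 0)) S u :=
  hf.comp_hasDerivWithinAt (f := fun v => (v, t)) u
    ((hasDerivWithinAt_id u S).prodMk (hasDerivWithinAt_const u S t)) fun _ hv => ⟨hv, ht⟩

lemma hasDerivWithinAt_snd_of_hasFDerivWithinAt {L : ℝ × ℝ →L[ℝ] E}
    (hf : HasFDerivWithinAt (fun p : ℝ × ℝ => f p.1 p.2) L (S ×ˢ I) (u, t)) (hu : u ∈ S) :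
    HasDerivWithinAt (f u) (L (0, 1)) I t :=
  hf.comp_hasDerivWithinAt (f := fun s => (u, s)) t
    ((hasDerivWithinAt_const t I u).prodMk (hasDerivWithinAt_id t I)) fun _ hs => ⟨hu, hs⟩

lemma partial_fst_eq_fderivWithin (hS : UniqueDiffOn ℝ S)
    (hf : DifferentiableOn ℝ (fun p : ℝ × ℝ => f p.1 p.2) (S ×ˢ I))
    (hfu : ∀ u ∈ S, ∀ t ∈ I, HasDerivWithinAt (fun v => f v t) (fu u t) S u) :
    ∀ p ∈ S ×ˢ I, fu p.1 p.2 =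
      fderivWithin ℝ (fun p : ℝ × ℝ => f p.1 p.2) (S ×ˢ I) p (1, 0) := fun p hp =>
  (hS p.1 hp.1).eq_deriv _ (hfu p.1 hp.1 p.2 hp.2)
    (hasDerivWithinAt_fst_of_hasFDerivWithinAt (hf p hp).hasFDerivWithinAt hp.2)

lemma partial_snd_eq_fderivWithin (hI : UniqueDiffOn ℝ I)
    (hf : DifferentiableOn ℝ (fun p : ℝ × ℝ => f p.1 p.2) (S ×ˢ I))
    (hft : ∀ u ∈ S, ∀ t ∈ I, HasDerivWithinAt (f u) (ft u t) I t) :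
    ∀ p ∈ S ×ˢ I, ft p.1 p.2 =
      fderivWithin ℝ (fun p : ℝ × ℝ => f p.1 p.2) (S ×ˢ I) p (0, 1) := fun p hp =>
  (hI p.2 hp.2).eq_deriv _ (hft p.1 hp.1 p.2 hp.2)
    (hasDerivWithinAt_snd_of_hasFDerivWithinAt (hf p hp).hasFDerivWithinAt hp.1)

lemma contDiffOn_partial_fst {n : WithTop ℕ∞} (hS : UniqueDiffOn ℝ S) (hI : UniqueDiffOn ℝ I)
    (hf : ContDiffOn ℝ (n + 1) (fun p : ℝ × ℝ => f p.1 p.2) (S ×ˢ I))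
    (hfu : ∀ u ∈ S, ∀ t ∈ I, HasDerivWithinAt (fun v => f v t) (fu u t) S u) :
    ContDiffOn ℝ n (fun p : ℝ × ℝ => fu p.1 p.2) (S ×ˢ I) :=
  ((hf.fderivWithin (hS.prod hI) le_rfl).clm_apply contDiffOn_const).congr
    (partial_fst_eq_fderivWithin hS (hf.differentiableOn (by simp)) hfu)

lemma contDiffOn_partial_snd {n : WithTop ℕ∞} (hS : UniqueDiffOn ℝ S) (hI : UniqueDiffOn ℝ I)
    (hf : ContDiffOn ℝ (n + 1) (fun p : ℝ × ℝ => f p.1 p.2) (S ×ˢ I))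
    (hft : ∀ u ∈ S, ∀ t ∈ I, HasDerivWithinAt (f u) (ft u t) I t) :
    ContDiffOn ℝ n (fun p : ℝ × ℝ => ft p.1 p.2) (S ×ˢ I) :=
  ((hf.fderivWithin (hS.prod hI) le_rfl).clm_apply contDiffOn_const).congr
    (partial_snd_eq_fderivWithin hI (hf.differentiableOn (by simp)) hft)

lemma contDiffOn_slice_fst {n : WithTop ℕ∞}
    (hf : ContDiffOn ℝ n (fun p : ℝ × ℝ => f p.1 p.2) (S ×ˢ I)) (ht : t ∈ I) :
    ContDiffOn ℝ n (fun v => f v t) S :=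
  hf.comp (f := fun v => (v, t)) (by fun_prop) fun _ hv => ⟨hv, ht⟩

lemma contDiffOn_slice_snd {n : WithTop ℕ∞}
    (hf : ContDiffOn ℝ n (fun p : ℝ × ℝ => f p.1 p.2) (S ×ˢ I)) (hu : u ∈ S) :
    ContDiffOn ℝ n (f u) I :=
  hf.comp (f := fun s => (u, s)) (by fun_prop) fun _ hs => ⟨hu, hs⟩

lemma mem_closure_interior_univ_prod_Ico {T : ℝ} (u : ℝ) (ht : t ∈ Ico 0 T) :
    (u, t) ∈ closure (interior ((univ : Set ℝ) ×ˢ Ico 0 T)) := by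
  rw [interior_prod_eq, interior_univ, interior_Ico, closure_prod_eq, closure_univ,
    closure_Ioo (ht.1.trans_lt ht.2).ne]
  exact ⟨trivial, Ico_subset_Icc_self ht⟩

lemma exists_mixed_partial (hS : UniqueDiffOn ℝ S) (hI : UniqueDiffOn ℝ I)
    (hf : ContDiffOn ℝ 2 (fun p : ℝ × ℝ => f p.1 p.2) (S ×ˢ I))
    (hfu : ∀ u ∈ S, ∀ t ∈ I, HasDerivWithinAt (fun v => f v t) (fu u t) S u)
    (hft : ∀ u ∈ S, ∀ t ∈ I, HasDerivWithinAt (f u) (ft u t) I t)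
    (hu : u ∈ S) (ht : t ∈ I) (hcl : (u, t) ∈ closure (interior (S ×ˢ I))) :
    ∃ m, HasDerivWithinAt (fu u) m I t ∧ HasDerivWithinAt (fun v => ft v t) m S u := by
  set D := fderivWithin ℝ (fun p : ℝ × ℝ => f p.1 p.2) (S ×ˢ I)
  have hp : (u, t) ∈ S ×ˢ I := ⟨hu, ht⟩
  have hD : HasFDerivWithinAt D (fderivWithin ℝ D (S ×ˢ I) (u, t)) (S ×ˢ I) (u, t) :=
    ((hf.fderivWithin (m := 1) (hS.prod hI) (by norm_num)).differentiableOn one_ne_zero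
      (u, t) hp).hasFDerivWithinAt
  have hsymm : IsSymmSndFDerivWithinAt ℝ (fun p : ℝ × ℝ => f p.1 p.2) (S ×ˢ I) (u, t) :=
    (hf (u, t) hp).isSymmSndFDerivWithinAt (by simp) (hS.prod hI) hcl hp
  have hdiff := hf.differentiableOn two_ne_zero
  refine ⟨fderivWithin ℝ D (S ×ˢ I) (u, t) (0, 1) (1, 0), ?_, ?_⟩
  · have hDt := hasDerivWithinAt_snd_of_hasFDerivWithinAt (f := fun v s => D (v, s)) hD hu
    refine HasDerivWithinAt.congr_of_mem ?_
      (fun s hs => partial_fst_eq_fderivWithin hS hdiff hfu (u, s) ⟨hu, hs⟩) ht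
    simpa using hDt.clm_apply (hasDerivWithinAt_const t I ((1 : ℝ), (0 : ℝ)))
  · have hDu := hasDerivWithinAt_fst_of_hasFDerivWithinAt (f := fun v s => D (v, s)) hD ht
    refine HasDerivWithinAt.congr_of_mem ?_
      (fun v hv => partial_snd_eq_fderivWithin hI hdiff hft (v, t) ⟨hv, ht⟩) hu
    rw [hsymm (0, 1) (1, 0)]
    simpa using hDu.clm_apply (hasDerivWithinAt_const u S ((0 : ℝ), (1 : ℝ)))

end PartialDerivatives

section MovingFrame

/-- The unit tangent vector `(cos θ, sin θ)` of a plane curve with tangent angle `θ`. -/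
noncomputable def unitTangent (θ : ℝ) : ℝ × ℝ := (cos θ, sin θ)

/-- The unit normal vector `(-sin θ, cos θ)`, inward for a positively oriented closed curve. -/
noncomputable def unitNormal (θ : ℝ) : ℝ × ℝ := (-sin θ, cos θ)

lemma hasDerivAt_unitTangent (θ : ℝ) : HasDerivAt unitTangent (unitNormal θ) θ :=
  (hasDerivAt_cos θ).prodMk (hasDerivAt_sin θ)

lemma hasDerivAt_unitNormal (θ : ℝ) : HasDerivAt unitNormal (-unitTangent θ) θ :=
  (hasDerivAt_sin θ).neg.prodMk (hasDerivAt_cos θ)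

lemma unitTangent_add_int_mul_two_pi (θ : ℝ) (m : ℤ) :
    unitTangent (θ + m * (2 * π)) = unitTangent θ := by
  simp only [unitTangent, cos_add_int_mul_two_pi, sin_add_int_mul_two_pi]

lemma frame_coordinates {θ a b : ℝ} {v : ℝ × ℝ} (hv : v = a • unitTangent θ + b • unitNormal θ) :
    a = v.1 * cos θ + v.2 * sin θ ∧ b = v.2 * cos θ - v.1 * sin θ := by
  subst hv
  simp only [unitTangent, unitNormal, Prod.fst_add, Prod.snd_add, Prod.smul_fst, Prod.smul_snd,
    smul_eq_mul]
  constructor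
  · linear_combination -a * sin_sq_add_cos_sq θ
  · linear_combination -b * sin_sq_add_cos_sq θ

lemma tangent_coordinate {θ a : ℝ} {v : ℝ × ℝ} (hv : v = a • unitTangent θ) :
    a = v.1 * cos θ + v.2 * sin θ :=
  (frame_coordinates (b := 0) (by rw [hv, zero_smul, add_zero])).1

lemma normal_coordinate {θ b : ℝ} {v : ℝ × ℝ} (hv : v = b • unitNormal θ) :
    b = v.2 * cos θ - v.1 * sin θ :=
  (frame_coordinates (a := 0) (by rw [hv, zero_smul, zero_add])).2

end MovingFrame

/-- A family `x(·, t)`, `t ∈ [0, T)`, of closed immersed plane curves of rotation index `m`, with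
speed `g`, tangent angle `ν` and signed curvature `k`, moving with normal velocity `β`. The
curvature enters through `∂_u ν = g k`, and the regularity is the one which the evolution equation
of the curvature requires. -/
structure IsClosedCurveFlow (T : ℝ) (m : ℤ) (x : ℝ → ℝ → ℝ × ℝ) (g ν k β : ℝ → ℝ → ℝ) :
    Prop where
  contDiffOn_curve : ContDiffOn ℝ 3 (fun p : ℝ × ℝ => x p.1 p.2) (Set.univ ×ˢ Set.Ico 0 T)
  contDiffOn_angle : ContDiffOn ℝ 2 (fun p : ℝ × ℝ => ν p.1 p.2) (Set.univ ×ˢ Set.Ico 0 T)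
  curve_add_one : ∀ u, ∀ t ∈ Set.Ico 0 T, x (u + 1) t = x u t
  angle_add_one : ∀ u, ∀ t ∈ Set.Ico 0 T, ν (u + 1) t = ν u t + m * (2 * π)
  speed_pos : ∀ u, ∀ t ∈ Set.Ico 0 T, 0 < g u t
  hasDerivAt_curve : ∀ u, ∀ t ∈ Set.Ico 0 T,
    HasDerivAt (fun v => x v t) (g u t • unitTangent (ν u t)) u
  hasDerivAt_angle : ∀ u, ∀ t ∈ Set.Ico 0 T, HasDerivAt (fun v => ν v t) (g u t * k u t) u
  hasDerivWithinAt_curve : ∀ u, ∀ t ∈ Set.Ico 0 T,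
    HasDerivWithinAt (x u) (β u t • unitNormal (ν u t)) (Set.Ico 0 T) t

namespace IsClosedCurveFlow

open Set

variable {T : ℝ} {m : ℤ} {x : ℝ → ℝ → ℝ × ℝ} {g ν k β : ℝ → ℝ → ℝ} {u t : ℝ}

section Regularity

lemma contDiffOn_speed (hx : IsClosedCurveFlow T m x g ν k β) :
    ContDiffOn ℝ 2 (fun p : ℝ × ℝ => g p.1 p.2) (univ ×ˢ Ico 0 T) := by
  have hxu := contDiffOn_partial_fst (n := 2) uniqueDiffOn_univ (uniqueDiffOn_Ico 0 T)
    hx.contDiffOn_curve fun u _ t ht => (hx.hasDerivAt_curve u t ht).hasDerivWithinAt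
  exact ((hxu.fst.mul hx.contDiffOn_angle.cos).add
    (hxu.snd.mul hx.contDiffOn_angle.sin)).congr fun p _ => tangent_coordinate rfl

lemma contDiffOn_normalVelocity (hx : IsClosedCurveFlow T m x g ν k β) :
    ContDiffOn ℝ 2 (fun p : ℝ × ℝ => β p.1 p.2) (univ ×ˢ Ico 0 T) := by
  have hxt := contDiffOn_partial_snd (n := 2) uniqueDiffOn_univ (uniqueDiffOn_Ico 0 T)
    hx.contDiffOn_curve fun u _ t ht => hx.hasDerivWithinAt_curve u t ht
  exact ((hxt.snd.mul hx.contDiffOn_angle.cos).sub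
    (hxt.fst.mul hx.contDiffOn_angle.sin)).congr fun p _ => normal_coordinate rfl

lemma contDiffOn_curvature (hx : IsClosedCurveFlow T m x g ν k β) :
    ContDiffOn ℝ 1 (fun p : ℝ × ℝ => k p.1 p.2) (univ ×ˢ Ico 0 T) := by
  have hνu := contDiffOn_partial_fst (n := 1) uniqueDiffOn_univ (uniqueDiffOn_Ico 0 T)
    hx.contDiffOn_angle fun u _ t ht => (hx.hasDerivAt_angle u t ht).hasDerivWithinAt
  have hg : ∀ p ∈ univ ×ˢ Ico 0 T, g p.1 p.2 ≠ 0 := fun p hp => (hx.speed_pos p.1 p.2 hp.2).ne'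
  exact (hνu.div (hx.contDiffOn_speed.of_le one_le_two) hg).congr
    fun p hp => (mul_div_cancel_left₀ _ (hg p hp)).symm

lemma contDiff_normalVelocity_slice (hx : IsClosedCurveFlow T m x g ν k β) (ht : t ∈ Ico 0 T) :
    ContDiff ℝ 2 fun v => β v t :=
  contDiffOn_univ.mp (contDiffOn_slice_fst hx.contDiffOn_normalVelocity ht)

lemma differentiable_speed_slice (hx : IsClosedCurveFlow T m x g ν k β) (ht : t ∈ Ico 0 T) :
    Differentiable ℝ fun v => g v t :=
  (contDiffOn_univ.mp (contDiffOn_slice_fst hx.contDiffOn_speed ht)).differentiable two_ne_zero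

lemma speed_add_one (hx : IsClosedCurveFlow T m x g ν k β) (ht : t ∈ Ico 0 T) :
    g (u + 1) t = g u t := by
  have hshift : HasDerivAt (fun v => x v t) (g (u + 1) t • unitTangent (ν u t)) u := by
    simpa only [hx.curve_add_one _ t ht, hx.angle_add_one u t ht,
      unitTangent_add_int_mul_two_pi] using (hx.hasDerivAt_curve (u + 1) t ht).comp_add_const u 1
  have hvec := hshift.unique (hx.hasDerivAt_curve u t ht)
  exact (tangent_coordinate rfl).trans (tangent_coordinate hvec).symm

lemma curvature_add_one (hx : IsClosedCurveFlow T m x g ν k β) (ht : t ∈ Ico 0 T) :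
    k (u + 1) t = k u t := by
  have hshift : HasDerivAt (fun v => ν v t + m * (2 * π)) (g u t * k (u + 1) t) u := by
    simpa only [hx.angle_add_one _ t ht, hx.speed_add_one ht] using
      (hx.hasDerivAt_angle (u + 1) t ht).comp_add_const u 1
  exact mul_left_cancel₀ (hx.speed_pos u t ht).ne'
    (hshift.unique ((hx.hasDerivAt_angle u t ht).add_const _))

end Regularity

section Evolution

lemma derivWithin_speed_and_angle (hx : IsClosedCurveFlow T m x g ν k β) (ht : t ∈ Ico 0 T) :
    derivWithin (g u) (Ico 0 T) t = -(β u t * (g u t * k u t)) ∧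
      g u t * derivWithin (ν u) (Ico 0 T) t = deriv (fun v => β v t) u := by
  obtain ⟨w, hw_time, hw_space⟩ := exists_mixed_partial uniqueDiffOn_univ (uniqueDiffOn_Ico 0 T)
    (hx.contDiffOn_curve.of_le (by norm_num))
    (fun u _ t ht => (hx.hasDerivAt_curve u t ht).hasDerivWithinAt)
    (fun u _ t ht => hx.hasDerivWithinAt_curve u t ht) trivial ht
    (mem_closure_interior_univ_prod_Ico u ht)
  have hgt := ((contDiffOn_slice_snd hx.contDiffOn_speed (mem_univ u)).differentiableOn
    two_ne_zero t ht).hasDerivWithinAt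
  have hνt := ((contDiffOn_slice_snd hx.contDiffOn_angle (mem_univ u)).differentiableOn
    two_ne_zero t ht).hasDerivWithinAt
  have hβu := ((hx.contDiff_normalVelocity_slice ht).differentiable two_ne_zero u).hasDerivAt
  have htime : w = derivWithin (g u) (Ico 0 T) t • unitTangent (ν u t) +
      (g u t * derivWithin (ν u) (Ico 0 T) t) • unitNormal (ν u t) := by
    rw [(uniqueDiffOn_Ico 0 T t ht).eq_deriv _ hw_time
      (hgt.smul ((hasDerivAt_unitTangent _).scomp_hasDerivWithinAt t hνt)), smul_smul, add_comm]
  have hspace : w = (-(β u t * (g u t * k u t))) • unitTangent (ν u t) +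
      deriv (fun v => β v t) u • unitNormal (ν u t) := by
    rw [(hasDerivWithinAt_univ.mp hw_space).unique
      (hβu.smul ((hasDerivAt_unitNormal _).scomp u (hx.hasDerivAt_angle u t ht)))]
    module
  exact ⟨(frame_coordinates htime).1.trans (frame_coordinates hspace).1.symm,
    (frame_coordinates htime).2.trans (frame_coordinates hspace).2.symm⟩

lemma hasDerivWithinAt_speed (hx : IsClosedCurveFlow T m x g ν k β) (ht : t ∈ Ico 0 T) :
    HasDerivWithinAt (g u) (-(β u t * (g u t * k u t))) (Ico 0 T) t := by
  have hg := (contDiffOn_slice_snd hx.contDiffOn_speed (mem_univ u)).differentiableOn two_ne_zero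
  exact (hg t ht).hasDerivWithinAt.congr_deriv (hx.derivWithin_speed_and_angle ht).1

lemma hasDerivWithinAt_angle (hx : IsClosedCurveFlow T m x g ν k β) (ht : t ∈ Ico 0 T) :
    HasDerivWithinAt (ν u) (deriv (fun v => β v t) u / g u t) (Ico 0 T) t := by
  have hν := (contDiffOn_slice_snd hx.contDiffOn_angle (mem_univ u)).differentiableOn two_ne_zero
  exact (hν t ht).hasDerivWithinAt.congr_deriv
    (eq_div_of_mul_eq (hx.speed_pos u t ht).ne'
      ((mul_comm _ _).trans (hx.derivWithin_speed_and_angle ht).2))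

lemma hasDerivWithinAt_curvature (hx : IsClosedCurveFlow T m x g ν k β) (ht : t ∈ Ico 0 T) :
    HasDerivWithinAt (k u)
      (deriv (fun v => deriv (fun r => β r t) v / g v t) u / g u t + β u t * k u t ^ 2)
      (Ico 0 T) t := by
  have hg := (hx.speed_pos u t ht).ne'
  have hkt := ((contDiffOn_slice_snd hx.contDiffOn_curvature (mem_univ u)).differentiableOn
    one_ne_zero t ht).hasDerivWithinAt
  obtain ⟨w, hw_time, hw_space⟩ := exists_mixed_partial uniqueDiffOn_univ (uniqueDiffOn_Ico 0 T)
    hx.contDiffOn_angle (fun u _ t ht => (hx.hasDerivAt_angle u t ht).hasDerivWithinAt)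
    (fun u _ t ht => hx.hasDerivWithinAt_angle ht) trivial ht
    (mem_closure_interior_univ_prod_Ico u ht)
  have htime := (uniqueDiffOn_Ico 0 T t ht).eq_deriv _ hw_time
    ((hx.hasDerivWithinAt_speed ht).mul hkt)
  have hspace := (hasDerivWithinAt_univ.mp hw_space).deriv
  refine hkt.congr_deriv ?_
  rw [hspace, htime]
  field_simp
  ring

lemma deriv_arclength_deriv_nonneg_of_isLocalMin (hx : IsClosedCurveFlow T m x g ν k β)
    (ht : t ∈ Ico 0 T) (hmin : IsLocalMin (fun v => β v t) u) :
    0 ≤ deriv (fun v => deriv (fun r => β r t) v / g v t) u := by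
  have hβ := hx.contDiff_normalVelocity_slice ht
  have hg := hx.speed_pos u t ht
  rw [deriv_fun_div (hβ.differentiable_deriv_two u) (hx.differentiable_speed_slice ht u) hg.ne',
    hmin.deriv_eq_zero, zero_mul, sub_zero]
  have hββ : 0 ≤ deriv (deriv fun r => β r t) u :=
    deriv_deriv_nonneg_of_isLocalMin hβ.continuous.continuousAt hmin
  positivity

lemma exists_deriv_weighted_curvature_of_isLocalMin (hx : IsClosedCurveFlow T m x g ν k β)
    {φ : ℝ → ℝ} (hφ : Differentiable ℝ φ) (hφ_nonneg : ∀ θ, 0 ≤ φ θ) (ht : t ∈ Ico 0 T)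
    (hmin : IsLocalMin (fun v => β v t) u) :
    ∃ d, HasDerivWithinAt (fun s => φ (ν u s) * k u s) d (Ico 0 T) t ∧
      β u t * k u t * (φ (ν u t) * k u t) ≤ d := by
  have hν : HasDerivWithinAt (ν u) 0 (Ico 0 T) t := by
    simpa only [hmin.deriv_eq_zero, zero_div] using hx.hasDerivWithinAt_angle (u := u) ht
  have hφν : HasDerivWithinAt (fun s => φ (ν u s)) 0 (Ico 0 T) t :=
    ((hφ (ν u t)).hasDerivAt.comp_hasDerivWithinAt t hν).congr_deriv (mul_zero _)
  refine ⟨_, hφν.mul (hx.hasDerivWithinAt_curvature ht), ?_⟩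
  have hss : 0 ≤ φ (ν u t) *
      (deriv (fun v => deriv (fun r => β r t) v / g v t) u / g u t) :=
    mul_nonneg (hφ_nonneg _)
      (div_nonneg (hx.deriv_arclength_deriv_nonneg_of_isLocalMin ht hmin) (hx.speed_pos u t ht).le)
  linarith

end Evolution

end IsClosedCurveFlow

section Stiffness

/-- The stiffness `σ + σ''` of an anisotropy function `σ`, the factor by which the anisotropic
curvature differs from the curvature. -/
noncomputable def stiffness (σ : ℝ → ℝ) (θ : ℝ) : ℝ := σ θ + deriv (deriv σ) θ

lemma differentiable_stiffness {σ : ℝ → ℝ} (hσ : ContDiff ℝ 3 σ) :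
    Differentiable ℝ (stiffness σ) := by
  have hσ' : ContDiff ℝ 2 (deriv σ) := (contDiff_succ_iff_deriv (n := 2).mp hσ).2.2
  exact (hσ.differentiable three_ne_zero).add hσ'.differentiable_deriv_two

lemma periodic_deriv {f : ℝ → ℝ} {c : ℝ} (hf : Function.Periodic f c) :
    Function.Periodic (deriv f) c := fun θ => by
  rw [← deriv_comp_add_const, hf.funext]

lemma periodic_stiffness {σ : ℝ → ℝ} {c : ℝ} (hσ : Function.Periodic σ c) :
    Function.Periodic (stiffness σ) c :=
  hσ.add (periodic_deriv (periodic_deriv hσ))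

end Stiffness

theorem convexity_preservation_anisoperimetric_flow_general {T : ℝ} {m : ℤ}
    {x : ℝ → ℝ → ℝ × ℝ} {g ν k : ℝ → ℝ → ℝ} {φ F : ℝ → ℝ} (hφ : Differentiable ℝ φ)
    (hφ_periodic : Function.Periodic φ (2 * π)) (hφ_pos : ∀ θ, 0 < φ θ)
    (hx : IsClosedCurveFlow T m x g ν k fun u t => φ (ν u t) * k u t - F t)
    {t₀ : ℝ} (ht₀ : t₀ ∈ Set.Ico 0 T) (hconv : ∀ u, 0 < k u t₀) :
    ∀ t ∈ Set.Ico t₀ T, ∀ u, 0 < k u t := by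
  intro t ht u
  have htime : Set.Icc t₀ t ⊆ Set.Ico 0 T :=
    fun s hs => ⟨ht₀.1.trans hs.1, hs.2.trans_lt ht.2⟩
  have hstrip : (Set.univ : Set ℝ) ×ˢ Set.Icc t₀ t ⊆ Set.univ ×ˢ Set.Ico 0 T :=
    Set.prod_mono_right htime
  have hk := hx.contDiffOn_curvature.continuousOn
  have hweighted : 0 < φ (ν u t) * k u t := by
    refine pos_of_periodic_of_mul_le_deriv_of_isLocalMin (h := fun v s => φ (ν v s) * k v s)
      (C := fun v s => (φ (ν v s) * k v s - F s) * k v s)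
      (((hφ.continuous.comp_continuousOn hx.contDiffOn_angle.continuousOn).mul hk).mono hstrip)
      ((hx.contDiffOn_normalVelocity.continuousOn.mul hk).mono hstrip)
      (fun s hs v => ?_) (fun v => mul_pos (hφ_pos _) (hconv v)) (fun s hs v hmin => ?_)
      t ⟨ht.1, le_rfl⟩ u
    · simp only [hx.angle_add_one v s (htime hs), hx.curvature_add_one (htime hs),
        (hφ_periodic.int_mul m) (ν v s)]
    · have hβmin : IsLocalMin (fun r => φ (ν r s) * k r s - F s) v :=
        hmin.mono fun r hr => sub_le_sub_right hr (F s)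
      obtain ⟨d, hd, hle⟩ := hx.exists_deriv_weighted_curvature_of_isLocalMin hφ
        (fun θ => (hφ_pos θ).le) (htime (Set.Ioc_subset_Icc_self hs)) hβmin
      exact ⟨d, hd.mono htime, hle⟩
  exact pos_of_mul_pos_right hweighted (hφ_pos _).le

/-- Convexity preservation for the anisoperimetric ratio gradient flow
`∂_t x = (k_σ − L_σ/(2A))·N`: if the curve is convex (`k > 0`) at time `t₀`,
it stays convex on `[t₀, T)`.  Here `k = νu/g` is the signed curvature. -/
theorem convexity_preservation_anisoperimetric_flow
    (σ : ℝ → ℝ)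
    (hσs : ContDiff ℝ (⊤ : ℕ∞) σ) (hσper : ∀ ν, σ (ν + 2 * π) = σ ν)
    (hσpos : ∀ ν, 0 < σ ν) (hσconv : ∀ ν, 0 < σ ν + deriv (deriv σ) ν)
    (T : ℝ) (x : ℝ → ℝ → ℝ × ℝ) (g νf νu : ℝ → ℝ → ℝ)
    (hxs : ContDiffOn ℝ (⊤ : ℕ∞) (fun p : ℝ × ℝ => x p.1 p.2)
      ((Set.univ : Set ℝ) ×ˢ Set.Ico (0:ℝ) T))
    (hνs : ContDiffOn ℝ (⊤ : ℕ∞) (fun p : ℝ × ℝ => νf p.1 p.2)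
      ((Set.univ : Set ℝ) ×ˢ Set.Ico (0:ℝ) T))
    (hper : ∀ u, ∀ t ∈ Set.Ico (0:ℝ) T, x (u + 1) t = x u t)
    (hνper : ∀ u, ∀ t ∈ Set.Ico (0:ℝ) T, νf (u + 1) t = νf u t + 2 * π)
    (hg : ∀ u, ∀ t ∈ Set.Ico (0:ℝ) T, 0 < g u t)
    (htang : ∀ u, ∀ t ∈ Set.Ico (0:ℝ) T,
      HasDerivAt (fun u' => x u' t)
        (g u t • ((Real.cos (νf u t), Real.sin (νf u t)) : ℝ × ℝ)) u)
    (hνu : ∀ u, ∀ t ∈ Set.Ico (0:ℝ) T, HasDerivAt (fun u' => νf u' t) (νu u t) u)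
    (hinj : ∀ t ∈ Set.Ico (0:ℝ) T, Set.InjOn (fun u => x u t) (Set.Ico 0 1))
    (hA : ∀ t ∈ Set.Ico (0:ℝ) T, 0 < areaF x g νf t)
    -- the anisoperimetric ratio gradient flow equation `∂_t x = (k_σ − L_σ/(2A))·N`
    (hflow : ∀ u, ∀ t ∈ Set.Ico (0:ℝ) T,
      HasDerivWithinAt (fun t' => x u t')
        ((((σ (νf u t) + deriv (deriv σ) (νf u t)) * (νu u t / g u t) -
            aLenF σ g νf t / (2 * areaF x g νf t)) •
          ((-Real.sin (νf u t), Real.cos (νf u t)) : ℝ × ℝ)))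
        (Set.Ico 0 T) t)
    -- `inf_{0 ≤ t ≤ t*} L_σ(t) > 0` for every `t* < T`
    (hLσ : ∀ tstar : ℝ, 0 ≤ tstar → tstar < T →
      ∃ c : ℝ, 0 < c ∧ ∀ t ∈ Set.Icc (0:ℝ) tstar, c ≤ aLenF σ g νf t)
    -- convexity at time `t₀`
    (t₀ : ℝ) (ht₀ : t₀ ∈ Set.Ico (0:ℝ) T)
    (hconv : ∀ u, 0 < νu u t₀ / g u t₀) :
    ∀ t ∈ Set.Ico t₀ T, ∀ u, 0 < νu u t / g u t := by
  have hcurves : IsClosedCurveFlow T 1 x g νf (fun u t => νu u t / g u t) fun u t =>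
      stiffness σ (νf u t) * (νu u t / g u t) - aLenF σ g νf t / (2 * areaF x g νf t) := by
    refine ⟨hxs.of_le ENat.LEInfty.out, hνs.of_le ENat.LEInfty.out, hper, fun u t ht => ?_, hg,
      htang, fun u t ht => ?_, hflow⟩
    · simpa only [Int.cast_one, one_mul] using hνper u t ht
    · simpa only [mul_div_cancel₀ _ (hg u t ht).ne'] using hνu u t ht
  exact convexity_preservation_anisoperimetric_flow_general
    (differentiable_stiffness (hσs.of_le ENat.LEInfty.out)) (periodic_stiffness hσper) hσconv
    hcurves ht₀ hconv
end
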